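/- arXiv:1806.04484 — 10 statements merged into one kernel-verified Lean document; each statement's English description precedes it below -/
import Mathlib

section
/- For every k > 0 there exists a constant C > 0 with the following property. Let m, n be positive integers, let p ∈ [0, 1/2], and set t := p·m. Suppose n ≥ C·m²·log(m) and t ≥ C·log(n). Let A ∈ {0,1}^{m×n} be a random matrix whose entries A_{ij} are independent with Pr[A_{ij} = 1] = p. Then with probability at least 1 - n^{-k} there exists a vector x ∈ {-1,1}^n such that ‖A·x‖_∞ ≤ 1. -/
open Real
open scoped Classical

/-!
The proof is a first-moment argument on a discrete Fourier transform.

Fix `a` and let `σ i ∈ {1, -1}` if row `i` has odd sum and `σ i = 0` otherwise. For a coloring `x`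
every coordinate of `v = a x + σ` is even and at most `n + 1` in absolute value, so with
`N = 2n + 1` the sum of `exp (π I ⟨θ, v⟩)` over the frequencies `θ ∈ {-n/N, …, n/N}^m` vanishes
unless `v = 0`. If `v = 0` then `x` has discrepancy at most `1`. Hence, if no coloring is good,
summing over all `x` and `σ` gives
`∑_θ ∏_{i odd} cos (π θ_i) ∏_j cos (π ⟨θ, a_j⟩) = 0`, where `a_j` is column `j` (`fourier_zero`).

Averaging over the signs `σ` is what makes the parity correction harmless: it contributes factors
`cos (π θ_i)`, which are nonnegative since `|θ_i| ≤ 1/2`. If every column has at most `3t` ones,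
`t = p m`, then Cauchy–Schwarz makes all terms with `‖θ‖² ≤ 1/(12 t)` nonnegative, and the term
`θ = 0` equals `1`; so the far frequencies contribute at least `1` in absolute value
(`one_le_of_bad`). Taking expectations over `a`,

* a column has more than `3t` ones with probability at most `exp (-t)` (`expect_exp_col`);
* for far `θ` the expectation of `|cos (π ⟨θ, a_j⟩)|` is at most `exp (-1/(16 m))`
  (`expect_abs_cos_far`), because `|cos u| ≤ 3/4 + cos (2u)/4` and the characteristic function of
  a Bernoulli variable decays like `exp (-4 p θ²)`.

The columns are independent, so the failure probability is at most
`n exp (-t) + (2n+1)^m exp (-n/(16 m))` (`expect_bad`), and this is at most `n^{-k}` once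
`n ≥ C' m² log n` (`log_growth`) and `t ≥ C log n` (`final_bound`).
-/

namespace RandomDisc

/-! ### The Fourier identity -/

/-- Orthogonality of characters modulo `2n + 1`: since `v = 2w` with `|w| < 2n + 1`, the summands
are the powers of the nontrivial root of unity `exp (2 π I w / (2n + 1))`. -/

lemma sum_cexp_eq_zero (n : ℕ) (v : ℤ) (hv : Even v) (hv0 : v ≠ 0) (hvn : |v| ≤ n + 1) :
    ∑ k ∈ Finset.Icc (-(n : ℤ)) n,
      Complex.exp ((π * (k / (2 * n + 1)) * v : ℝ) * Complex.I) = 0 := by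
  obtain ⟨w, rfl⟩ := hv
  have hN : ((2 * n + 1 : ℕ) : ℂ) ≠ 0 := by exact_mod_cast (by omega : 2 * n + 1 ≠ 0)
  set z : ℂ := Complex.exp (2 * π * Complex.I * (w / (2 * n + 1 : ℕ))) with hz
  have hz1 : z ≠ 1 := by
    intro h
    rw [hz, Complex.exp_eq_one_iff] at h
    obtain ⟨q, hq⟩ := h
    have h2 : (w : ℂ) = q * (2 * n + 1 : ℕ) := by
      have hpi : (2 * π * Complex.I : ℂ) ≠ 0 := Complex.two_pi_I_ne_zero
      rw [mul_comm (q : ℂ)] at hq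
      have := mul_left_cancel₀ hpi hq
      field_simp at this
      linear_combination this
    have h3 : w = q * (2 * n + 1 : ℕ) := by exact_mod_cast h2
    have hq0 : q ≠ 0 := by rintro rfl; apply hv0; simp [h3]
    have h4 : 1 ≤ |q| := Int.one_le_abs hq0
    have h5 : |w| = |q| * (2 * n + 1) := by
      rw [h3, abs_mul, Nat.abs_cast]; push_cast; ring
    have h6 : |w + w| = 2 * |w| := by rw [← two_mul, abs_mul]; norm_num
    nlinarith
  have hzN : z ^ (2 * n + 1) = 1 := by
    rw [hz, ← Complex.exp_nat_mul, Complex.exp_eq_one_iff]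
    exact ⟨w, by field_simp⟩
  have hgeom : ∑ k ∈ Finset.range (2 * n + 1), z ^ k = 0 := by
    have := mul_geom_sum z (2 * n + 1)
    rw [hzN, sub_self] at this
    exact (mul_eq_zero.mp this).resolve_left (sub_ne_zero.mpr hz1)
  have : ∑ k ∈ Finset.Icc (-(n : ℤ)) n,
      Complex.exp ((π * (k / (2 * n + 1)) * ((w + w : ℤ) : ℝ) : ℝ) * Complex.I)
      = ∑ k ∈ Finset.range (2 * n + 1), z ^ k * (z ^ n)⁻¹ := by
    symm
    refine Finset.sum_bij (fun k _ => (k : ℤ) - n) ?_ ?_ ?_ ?_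
    · intro k hk; simp at hk ⊢; omega
    · intro a _ b _ h; simpa using h
    · intro b hb
      simp at hb
      exact ⟨(b + n).toNat, by simp; omega, by simp; omega⟩
    · intro k hk
      rw [hz, ← Complex.exp_nat_mul, ← Complex.exp_nat_mul, ← Complex.exp_neg, ← Complex.exp_add]
      congr 1
      push_cast
      field_simp
      ring
  rw [this, ← Finset.sum_mul, hgeom, zero_mul]

lemma even_of_odd {T R s : ℤ} (h : Even (T - R)) (hR : Odd R) (hs : Odd s) : Even (T + s) := by
  have := h.add (hR.add_odd hs)
  rwa [show T - R + (R + s) = T + s by ring] at this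

lemma even_of_even {T R : ℤ} (h : Even (T - R)) (hR : Even R) : Even T := by
  simpa using h.add hR

/-- The admissible parity corrections `σ i` of row `i`: `±1` if the row sum is odd, else `0`. -/
def sgnSet {m n : ℕ} (a : Fin m → Fin n → Bool) (i : Fin m) : Finset ℤ :=
  if Odd (∑ j, if a i j then (1 : ℤ) else 0) then {1, -1} else {0}

/-- The factor that averaging `exp (I u s)` over the parity corrections `s` of row `i` contributes:
`cos u` if the row sum is odd, else `1`. -/
noncomputable def parFactor {m n : ℕ} (a : Fin m → Fin n → Bool) (i : Fin m) (u : ℝ) : ℝ :=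
  if Odd (∑ j, if a i j then (1 : ℤ) else 0) then Real.cos u else 1

lemma sum_pm (u : ℝ) : ∑ x ∈ ({1, -1} : Finset ℤ), Complex.exp ((u * x : ℝ) * Complex.I)
    = 2 * (Real.cos u : ℂ) := by
  rw [Finset.sum_pair (by norm_num), Complex.ofReal_cos, Complex.two_cos]
  push_cast
  ring_nf

lemma sum_sgnSet {m n : ℕ} (a : Fin m → Fin n → Bool) (i : Fin m) : ∃ c : ℝ, c ≠ 0 ∧ ∀ u : ℝ,
    ∑ s ∈ sgnSet a i, Complex.exp ((u * s : ℝ) * Complex.I) = c * (parFactor a i u : ℂ) := by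
  unfold sgnSet parFactor
  split_ifs
  · exact ⟨2, by norm_num, fun u => by rw [sum_pm]; norm_num⟩
  · exact ⟨1, by norm_num, fun u => by simp⟩

/-- If no coloring has discrepancy at most `1`, the Fourier sum counting the pairs (coloring, parity
correction) with `a x + σ = 0` vanishes. -/
lemma fourier_zero {m n : ℕ} (a : Fin m → Fin n → Bool)
    (h : ¬ ∃ x : Fin n → ℝ, (∀ j, x j = 1 ∨ x j = -1) ∧
            ∀ i, |∑ j, if a i j then x j else 0| ≤ 1) :
    ∑ k ∈ Fintype.piFinset (fun _ : Fin m => Finset.Icc (-(n : ℤ)) n),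
      ((∏ i, parFactor a i (π * (k i / (2 * n + 1)))) *
        ∏ j, Real.cos (π * ∑ i, if a i j then (k i / (2 * n + 1) : ℝ) else 0)) = 0 := by
  choose c hc0 hc using sum_sgnSet a
  set P := Fintype.piFinset (fun _ : Fin m => Finset.Icc (-(n : ℤ)) n)
  set X := Fintype.piFinset (fun _ : Fin n => ({1, -1} : Finset ℤ))
  set S := Fintype.piFinset (sgnSet a)
  -- the discrepancy vector, shifted by the parity signs
  let v : (Fin n → ℤ) → (Fin m → ℤ) → Fin m → ℤ :=
    fun x s i => (∑ j, if a i j then x j else 0) + s i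
  have key : ∀ k : Fin m → ℤ,
      (((∏ i, c i) * 2 ^ n * ((∏ i, parFactor a i (π * (k i / (2 * n + 1)))) *
        ∏ j, Real.cos (π * ∑ i, if a i j then (k i / (2 * n + 1) : ℝ) else 0)) : ℝ) : ℂ)
      = ∑ x ∈ X, ∑ s ∈ S, ∏ i,
          Complex.exp ((π * (k i / (2 * n + 1)) * v x s i : ℝ) * Complex.I) := by
    intro k
    have e1 : ∏ i, ((c i : ℂ) * (parFactor a i (π * (k i / (2 * n + 1))) : ℂ))
        = ∑ s ∈ S, ∏ i, Complex.exp ((π * (k i / (2 * n + 1)) * s i : ℝ) * Complex.I) := by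
      simp_rw [← hc]
      rw [Finset.prod_univ_sum]
    have e2 : ∏ j, (2 * (Real.cos (π * ∑ i, if a i j then (k i / (2 * n + 1) : ℝ) else 0) : ℂ))
        = ∑ x ∈ X, ∏ j, Complex.exp (((π * ∑ i, if a i j then (k i / (2 * n + 1) : ℝ) else 0)
            * x j : ℝ) * Complex.I) := by
      simp_rw [← sum_pm]
      rw [Finset.prod_univ_sum]
    have e3 : (((∏ i, c i) * 2 ^ n * ((∏ i, parFactor a i (π * (k i / (2 * n + 1)))) *
        ∏ j, Real.cos (π * ∑ i, if a i j then (k i / (2 * n + 1) : ℝ) else 0)) : ℝ) : ℂ)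
        = (∏ j, (2 * (Real.cos (π * ∑ i, if a i j then (k i / (2 * n + 1) : ℝ) else 0) : ℂ))) *
        ∏ i, ((c i : ℂ) * (parFactor a i (π * (k i / (2 * n + 1))) : ℂ)) := by
      rw [Finset.prod_mul_distrib, Finset.prod_mul_distrib]
      simp only [Finset.prod_const, Finset.card_univ, Fintype.card_fin, Complex.ofReal_mul,
        Complex.ofReal_prod, Complex.ofReal_pow, Complex.ofReal_ofNat]
      ring
    rw [e3, e1, e2, Finset.sum_mul_sum]
    refine Finset.sum_congr rfl fun x _ => Finset.sum_congr rfl fun s _ => ?_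
    rw [← Complex.exp_sum, ← Complex.exp_sum, ← Complex.exp_sum, ← Complex.exp_add]
    congr 1
    rw [← Finset.sum_mul, ← Finset.sum_mul, ← Finset.sum_mul, ← add_mul]
    congr 1
    norm_cast
    simp only [v]
    push_cast
    simp_rw [mul_add, Finset.sum_add_distrib, mul_assoc, ← Finset.mul_sum, ← mul_add]
    congr 2
    simp_rw [Finset.sum_mul, Finset.mul_sum]
    rw [Finset.sum_comm]
    refine Finset.sum_congr rfl fun i _ => Finset.sum_congr rfl fun j _ => ?_
    split_ifs <;> simp
  have hzero : ∀ x ∈ X, ∀ s ∈ S, ∑ k ∈ P, ∏ i,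
      Complex.exp ((π * (k i / (2 * n + 1)) * v x s i : ℝ) * Complex.I) = 0 := by
    intro x hx s hs
    have hx' : ∀ j, x j = 1 ∨ x j = -1 := by
      intro j; have := Fintype.mem_piFinset.mp hx j; simpa using this
    have hs' : ∀ i, s i ∈ sgnSet a i := fun i => Fintype.mem_piFinset.mp hs i
    have hs1 : ∀ i, |s i| ≤ 1 := by
      intro i
      have := hs' i
      unfold sgnSet at this
      split_ifs at this <;> simp at this <;> grind
    have hne : ∃ i, v x s i ≠ 0 := by
      by_contra! hv
      apply h
      refine ⟨fun j => x j, fun j => ?_, fun i => ?_⟩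
      · rcases hx' j with h | h <;> simp [h]
      · have h1 : (∑ j, if a i j then x j else 0) = - s i := by
          have := hv i; simp only [v] at this; linarith
        have h2 : |(∑ j, if a i j then x j else 0)| ≤ 1 := by rw [h1, abs_neg]; exact hs1 i
        show |∑ j, if a i j then (x j : ℝ) else 0| ≤ 1
        exact_mod_cast h2
    obtain ⟨i, hi⟩ := hne
    rw [← Finset.prod_univ_sum (fun _ : Fin m => Finset.Icc (-(n : ℤ)) n)
      (fun i k => Complex.exp ((π * (k / (2 * n + 1)) * v x s i : ℝ) * Complex.I))]
    refine Finset.prod_eq_zero (Finset.mem_univ i) (sum_cexp_eq_zero n _ ?_ hi ?_)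
    · have hpar : Even ((∑ j, if a i j then x j else 0) - ∑ j, if a i j then (1 : ℤ) else 0) := by
        rw [← Finset.sum_sub_distrib]
        refine Finset.even_sum _ fun j _ => ?_
        rcases hx' j with h | h <;> split_ifs <;> simp [h]
      have h1 := hs' i
      unfold sgnSet at h1
      simp only [v]
      split_ifs at h1 with ho
      · have h2 : Odd (s i) := by
          simp at h1; rcases h1 with h | h <;> rw [h] <;> decide
        exact even_of_odd hpar ho h2
      · rw [Int.not_odd_iff_even] at ho
        simp at h1
        rw [h1, add_zero]
        exact even_of_even hpar ho
    · have h1 : |∑ j, if a i j then x j else 0| ≤ n := by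
        refine (Finset.abs_sum_le_sum_abs _ _).trans ?_
        refine (Finset.sum_le_sum (g := fun _ => (1 : ℤ)) fun j _ => ?_).trans (by simp)
        rcases hx' j with h | h <;> split_ifs <;> simp [h]
      exact (abs_add_le _ _).trans (add_le_add h1 (hs1 i))
  have htot : (((∏ i, c i) * 2 ^ n *
      ∑ k ∈ P, ((∏ i, parFactor a i (π * (k i / (2 * n + 1)))) *
        ∏ j, Real.cos (π * ∑ i, if a i j then (k i / (2 * n + 1) : ℝ) else 0)) : ℝ) : ℂ) = 0 := by
    rw [Finset.mul_sum, Complex.ofReal_sum, Finset.sum_congr rfl fun k _ => key k,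
      Finset.sum_comm]
    refine Finset.sum_eq_zero fun x hx => ?_
    rw [Finset.sum_comm]
    exact Finset.sum_eq_zero fun s hs => hzero x hx s hs
  have htot' := Complex.ofReal_eq_zero.mp htot
  refine (mul_eq_zero.mp htot').resolve_left ?_
  exact mul_ne_zero (Finset.prod_ne_zero_iff.mpr fun i _ => hc0 i) (by positivity)


/-! ### Expectations over the random matrix -/

/-- The Bernoulli weight of a single column `b` of the matrix. -/
noncomputable def colWeight {m : ℕ} (p : ℝ) (b : Fin m → Bool) : ℝ :=
  ∏ i, if b i then p else 1 - p

lemma colWeight_nonneg {m : ℕ} {p : ℝ} (h0 : 0 ≤ p) (h1 : p ≤ 1 / 2) (b : Fin m → Bool) :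
    0 ≤ colWeight p b :=
  Finset.prod_nonneg fun i _ => by split_ifs <;> linarith

/-- Independence of the columns. -/
lemma expect_prod_columns {m n : ℕ} (p : ℝ) (g : Fin n → (Fin m → Bool) → ℝ) :
    ∑ a : Fin m → Fin n → Bool, (∏ i, ∏ j, (if a i j then p else 1 - p)) *
        ∏ j, g j (fun i => a i j)
      = ∏ j, ∑ b, colWeight p b * g j b := by
  rw [Finset.prod_univ_sum, Fintype.piFinset_univ]
  refine Fintype.sum_equiv (Equiv.piComm _) _ _ fun a => ?_
  rw [Finset.prod_comm, ← Finset.prod_mul_distrib]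
  rfl

/-- Independence of the entries of a column. It is used with `R = ℝ` for the moment generating
function and with `R = ℂ` for the characteristic function. -/
lemma expect_prod_entries {m : ℕ} {R : Type*} [CommRing R] [Algebra ℝ R] (p : ℝ)
    (f : Fin m → R) :
    ∑ b : Fin m → Bool, algebraMap ℝ R (colWeight p b) * ∏ i, (if b i then f i else 1)
      = ∏ i, (algebraMap ℝ R p * f i + algebraMap ℝ R (1 - p)) := by
  have : ∀ i, algebraMap ℝ R p * f i + algebraMap ℝ R (1 - p)
      = ∑ b : Bool, algebraMap ℝ R (if b then p else 1 - p) * (if b then f i else 1) := by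
    intro i; simp
  simp_rw [this]
  rw [Finset.prod_univ_sum, Fintype.piFinset_univ]
  refine Finset.sum_congr rfl fun b _ => ?_
  rw [Finset.prod_mul_distrib, colWeight, map_prod]

lemma sum_colWeight {m : ℕ} (p : ℝ) : ∑ b : Fin m → Bool, colWeight p b = 1 := by
  have := expect_prod_entries (R := ℝ) (m := m) p (fun _ => 1)
  simpa using this

/-- The Chernoff bound, in moment form, for a column having more than `3 p m` ones. -/
lemma expect_exp_col {m : ℕ} {p : ℝ} (h0 : 0 ≤ p) :
    ∑ b : Fin m → Bool, colWeight p b *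
      Real.exp ((∑ i, if b i then (1 : ℝ) else 0) - 3 * (p * m)) ≤ Real.exp (-(p * m)) := by
  have h := expect_prod_entries (R := ℝ) (m := m) p (fun _ => Real.exp 1)
  have h1 : ∀ b : Fin m → Bool, Real.exp ((∑ i, if b i then (1 : ℝ) else 0) - 3 * (p * m))
      = Real.exp (-(3 * (p * m))) * ∏ i, (if b i then Real.exp 1 else 1) := by
    intro b
    rw [sub_eq_add_neg, Real.exp_add, Real.exp_sum, mul_comm]
    congr 1
    refine Finset.prod_congr rfl fun i _ => ?_
    split_ifs <;> simp
  simp only [Algebra.algebraMap_self, RingHom.id_apply] at h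
  simp_rw [h1, mul_left_comm _ (Real.exp (-(3 * (p * m)))), ← Finset.mul_sum]
  rw [h]
  have h2 : ∏ i : Fin m, (p * Real.exp 1 + (1 - p)) ≤ Real.exp (2 * (p * m)) := by
    rw [Finset.prod_const, Finset.card_univ, Fintype.card_fin]
    have : p * Real.exp 1 + (1 - p) ≤ Real.exp (2 * p) := by
      have := Real.add_one_le_exp (2 * p)
      have := Real.exp_one_lt_d9
      nlinarith
    calc _ ≤ (Real.exp (2 * p)) ^ m := by
          gcongr
          have := Real.exp_one_gt_d9
          nlinarith
      _ = _ := by rw [← Real.exp_nat_mul]; ring_nf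
  calc _ ≤ Real.exp (-(3 * (p * m))) * Real.exp (2 * (p * m)) := by gcongr
    _ = _ := by rw [← Real.exp_add]; ring_nf

/-- Decay of the Bernoulli characteristic function: its squared modulus is
`1 - 4 p (1 - p) sin² (π θ)`, and `|sin (π θ)| ≥ 2 |θ|` on `[-1/2, 1/2]`. -/
lemma norm_bernoulli_char {p : ℝ} (h0 : 0 ≤ p) (h1 : p ≤ 1 / 2) {θ : ℝ} (hθ : |θ| ≤ 1 / 2) :
    ‖((p : ℂ) * Complex.exp ((2 * (π * θ) : ℝ) * Complex.I) + ((1 - p : ℝ) : ℂ))‖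
      ≤ Real.exp (-(4 * p * θ ^ 2)) := by
  have hsin : (2 * θ) ^ 2 ≤ Real.sin (π * θ) ^ 2 := by
    rw [sq_le_sq]
    have h := Real.mul_abs_le_abs_sin (x := π * θ) (by
      rw [abs_mul, abs_of_pos pi_pos]; nlinarith [pi_pos])
    rw [abs_mul π, abs_of_pos pi_pos] at h
    rw [abs_mul, abs_two]
    have : 2 / π * (π * |θ|) = 2 * |θ| := by field_simp
    linarith
  have hsq : ‖((p : ℂ) * Complex.exp ((2 * (π * θ) : ℝ) * Complex.I) + ((1 - p : ℝ) : ℂ))‖ ^ 2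
      = 1 - 4 * p * (1 - p) * Real.sin (π * θ) ^ 2 := by
    rw [← Complex.normSq_eq_norm_sq, Complex.normSq_apply]
    simp only [Complex.add_re, Complex.add_im, Complex.re_ofReal_mul, Complex.im_ofReal_mul,
      Complex.exp_ofReal_mul_I_re, Complex.exp_ofReal_mul_I_im, Complex.ofReal_re,
      Complex.ofReal_im]
    rw [Real.cos_two_mul, Real.sin_two_mul]
    have := Real.sin_sq_add_cos_sq (π * θ)
    have hc : Real.cos (π * θ) ^ 2 = 1 - Real.sin (π * θ) ^ 2 := by linarith
    ring_nf
    rw [show Real.cos (π * θ) ^ 4 = (Real.cos (π * θ) ^ 2) ^ 2 by ring, hc]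
    ring
  have hs0 := sq_nonneg (Real.sin (π * θ))
  refine le_of_sq_le_sq ?_ (Real.exp_pos _).le
  rw [hsq, ← Real.exp_nat_mul]
  refine le_trans ?_ (Real.add_one_le_exp _)
  push_cast
  have h4 : 2 * p * (2 * θ) ^ 2 ≤ 2 * p * Real.sin (π * θ) ^ 2 := by gcongr
  have h5 : 0 ≤ (1 - 2 * p) * p * Real.sin (π * θ) ^ 2 := by
    apply mul_nonneg (mul_nonneg (by linarith) h0) hs0
  nlinarith

lemma expect_abs_cos {m : ℕ} {p : ℝ} (h0 : 0 ≤ p) (h1 : p ≤ 1 / 2) (θ : Fin m → ℝ)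
    (hθ : ∀ i, |θ i| ≤ 1 / 2) :
    ∑ b : Fin m → Bool, colWeight p b * |Real.cos (π * ∑ i, if b i then θ i else 0)|
      ≤ 3 / 4 + 1 / 4 * Real.exp (-(4 * p * ∑ i, θ i ^ 2)) := by
  have hcos : ∀ u : ℝ, |Real.cos u| ≤ 3 / 4 + 1 / 4 * Real.cos (2 * u) := by
    intro u
    rw [Real.cos_two_mul, ← sq_abs (Real.cos u)]
    nlinarith [sq_nonneg (|Real.cos u| - 1)]
  have hre : ∑ b : Fin m → Bool, colWeight p b *
      Real.cos (2 * (π * ∑ i, if b i then θ i else 0))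
      ≤ Real.exp (-(4 * p * ∑ i, θ i ^ 2)) := by
    have h := expect_prod_entries (R := ℂ) (m := m) p
      (fun i => Complex.exp ((2 * (π * θ i) : ℝ) * Complex.I))
    have e : ∑ b : Fin m → Bool, colWeight p b *
        Real.cos (2 * (π * ∑ i, if b i then θ i else 0))
        = (∏ i, (algebraMap ℝ ℂ p * Complex.exp ((2 * (π * θ i) : ℝ) * Complex.I)
            + algebraMap ℝ ℂ (1 - p))).re := by
      rw [← h, Complex.re_sum]
      refine Finset.sum_congr rfl fun b _ => ?_
      have : ∏ i, (if b i then Complex.exp ((2 * (π * θ i) : ℝ) * Complex.I) else 1)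
          = Complex.exp ((2 * (π * ∑ i, if b i then θ i else 0) : ℝ) * Complex.I) := by
        rw [Finset.mul_sum, Finset.mul_sum, Complex.ofReal_sum, Finset.sum_mul, Complex.exp_sum]
        refine Finset.prod_congr rfl fun i _ => ?_
        split_ifs <;> simp
      rw [this, Complex.coe_algebraMap, Complex.re_ofReal_mul, Complex.exp_ofReal_mul_I_re]
    rw [e]
    refine (Complex.re_le_norm _).trans ?_
    rw [norm_prod, Finset.mul_sum, ← Finset.sum_neg_distrib, Real.exp_sum]
    exact Finset.prod_le_prod (fun i _ => norm_nonneg _)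
      fun i _ => norm_bernoulli_char h0 h1 (hθ i)
  calc _ ≤ ∑ b : Fin m → Bool, colWeight p b *
        (3 / 4 + 1 / 4 * Real.cos (2 * (π * ∑ i, if b i then θ i else 0))) :=
        Finset.sum_le_sum fun b _ =>
          mul_le_mul_of_nonneg_left (hcos _) (colWeight_nonneg h0 h1 b)
    _ = 3 / 4 * ∑ b : Fin m → Bool, colWeight p b + 1 / 4 * ∑ b : Fin m → Bool, colWeight p b *
          Real.cos (2 * (π * ∑ i, if b i then θ i else 0)) := by
        rw [Finset.mul_sum, Finset.mul_sum, ← Finset.sum_add_distrib]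
        exact Finset.sum_congr rfl fun b _ => by ring
    _ ≤ _ := by rw [sum_colWeight]; linarith

/-- Frequencies with `‖θ‖² > 1/(12 p m)` lose a factor `exp (-1/(16 m))` for each column. -/
lemma expect_abs_cos_far {m : ℕ} (hm : 0 < m) {p : ℝ} (h0 : 0 < p) (h1 : p ≤ 1 / 2)
    (θ : Fin m → ℝ) (hθ : ∀ i, |θ i| ≤ 1 / 2) (hfar : 1 < 12 * (p * m) * ∑ i, θ i ^ 2) :
    ∑ b : Fin m → Bool, colWeight p b * |Real.cos (π * ∑ i, if b i then θ i else 0)|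
      ≤ Real.exp (-(1 / (16 * m))) := by
  refine (expect_abs_cos h0.le h1 θ hθ).trans ?_
  have hm' : (1 : ℝ) ≤ m := by exact_mod_cast hm
  have h3 : 1 / (3 * (m : ℝ)) ≤ 4 * p * ∑ i, θ i ^ 2 := by
    rw [div_le_iff₀ (by positivity)]; nlinarith
  have h4 : Real.exp (-(4 * p * ∑ i, θ i ^ 2)) ≤ 1 - 1 / (4 * m) := by
    refine (Real.exp_le_exp.mpr (neg_le_neg h3)).trans ?_
    rw [Real.exp_neg]
    have h5 := Real.add_one_le_exp (1 / (3 * (m : ℝ)))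
    have h6 : (0:ℝ) < 1 / (3 * (m : ℝ)) := by positivity
    refine (inv_anti₀ (by positivity) h5).trans ?_
    rw [inv_le_iff_one_le_mul₀ (by positivity)]
    have : (1 - 1 / (4 * (m:ℝ))) * (1 / (3 * m) + 1) = 1 + (m - 1) / (12 * m ^ 2) := by
      field_simp; ring
    rw [this]
    have : 0 ≤ ((m:ℝ) - 1) / (12 * m ^ 2) := div_nonneg (by linarith) (by positivity)
    linarith
  have h5 := Real.add_one_le_exp (-(1 / (16 * (m : ℝ))))
  have h6 : 1 / (16 * (m : ℝ)) = 1 / 4 * (1 / (4 * m)) := by field_simp; norm_num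
  linarith

/-! ### The failure event and its probability -/

lemma parFactor_nonneg {m n : ℕ} (a : Fin m → Fin n → Bool) (i : Fin m) {θ : ℝ}
    (hθ : |θ| ≤ 1 / 2) : 0 ≤ parFactor a i (π * θ) := by
  unfold parFactor
  split_ifs
  · have := abs_le.mp hθ
    apply Real.cos_nonneg_of_neg_pi_div_two_le_of_le <;> nlinarith [pi_pos]
  · exact zero_le_one

lemma abs_parFactor_le {m n : ℕ} (a : Fin m → Fin n → Bool) (i : Fin m) (u : ℝ) :
    |parFactor a i u| ≤ 1 := by
  unfold parFactor
  split_ifs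
  · exact Real.abs_cos_le_one u
  · simp

/-- By Cauchy–Schwarz `|⟨θ, b⟩|² ≤ 3 t ‖θ‖² ≤ 1/4` for a column `b` with at most `3 t` ones. -/
lemma cos_nonneg_near {m : ℕ} {t : ℝ} (b : Fin m → Bool) (θ : Fin m → ℝ)
    (hb : (∑ i, if b i then (1 : ℝ) else 0) ≤ 3 * t)
    (hnear : 12 * t * ∑ i, θ i ^ 2 ≤ 1) :
    0 ≤ Real.cos (π * ∑ i, if b i then θ i else 0) := by
  have hcs := Finset.sum_mul_sq_le_sq_mul_sq Finset.univ
    (fun i => if b i then (1 : ℝ) else 0) θ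
  have e1 : ∀ i, (if b i then (1 : ℝ) else 0) * θ i = if b i then θ i else 0 := by
    intro i; split_ifs <;> simp
  have e2 : ∀ i, (if b i then (1 : ℝ) else 0) ^ 2 = if b i then (1 : ℝ) else 0 := by
    intro i; split_ifs <;> simp
  simp only [e1, e2] at hcs
  have hnn : 0 ≤ ∑ i, θ i ^ 2 := Finset.sum_nonneg fun i _ => sq_nonneg _
  have h2 : (∑ i, if b i then θ i else 0) ^ 2 ≤ (1 / 2) ^ 2 := by nlinarith
  have h3 := abs_le.mp (abs_le_of_sq_le_sq h2 (by norm_num))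
  apply Real.cos_nonneg_of_neg_pi_div_two_le_of_le <;> nlinarith [pi_pos]

lemma freq_abs_le {n : ℕ} {k : ℤ} (hk : k ∈ Finset.Icc (-(n : ℤ)) n) :
    |(k / (2 * n + 1) : ℝ)| ≤ 1 / 2 := by
  rw [Finset.mem_Icc] at hk
  have h1 : (-(n : ℝ)) ≤ k := by exact_mod_cast hk.1
  have h2 : (k : ℝ) ≤ n := by exact_mod_cast hk.2
  have hN : (0 : ℝ) < 2 * n + 1 := by positivity
  rw [abs_le, le_div_iff₀ hN, div_le_iff₀ hN]
  constructor <;> linarith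

/-- The frequencies `k / (2n+1)`, `|k i| ≤ n`, of Euclidean norm exceeding `1 / √(12 t)`. -/
noncomputable def farFreq (m n : ℕ) (t : ℝ) : Finset (Fin m → ℤ) :=
  (Fintype.piFinset (fun _ : Fin m => Finset.Icc (-(n : ℤ)) n)).filter
    (fun k => 1 < 12 * t * ∑ i, (k i / (2 * n + 1) : ℝ) ^ 2)

/-- The indicator of the failure event is bounded by a sum of two terms whose expectations
factorise: one detecting heavy columns, one summing over far frequencies. -/
lemma one_le_of_bad {m n : ℕ} (t : ℝ) (a : Fin m → Fin n → Bool)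
    (h : ¬ ∃ x : Fin n → ℝ, (∀ j, x j = 1 ∨ x j = -1) ∧
            ∀ i, |∑ j, if a i j then x j else 0| ≤ 1) :
    1 ≤ ∑ j, Real.exp ((∑ i, if a i j then (1 : ℝ) else 0) - 3 * t) +
      ∑ k ∈ farFreq m n t,
        ∏ j, |Real.cos (π * ∑ i, if a i j then (k i / (2 * n + 1) : ℝ) else 0)| := by
  have hfar0 : 0 ≤ ∑ k ∈ farFreq m n t,
        ∏ j, |Real.cos (π * ∑ i, if a i j then (k i / (2 * n + 1) : ℝ) else 0)| :=
    Finset.sum_nonneg fun k _ => Finset.prod_nonneg fun j _ => abs_nonneg _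
  have hcol0 : 0 ≤ ∑ j, Real.exp ((∑ i, if a i j then (1 : ℝ) else 0) - 3 * t) :=
    Finset.sum_nonneg fun j _ => (Real.exp_pos _).le
  by_cases hcol : ∃ j, 3 * t < ∑ i, if a i j then (1 : ℝ) else 0
  · obtain ⟨j, hj⟩ := hcol
    have h1 : 1 ≤ Real.exp ((∑ i, if a i j then (1 : ℝ) else 0) - 3 * t) :=
      Real.one_le_exp (by linarith)
    have h2 := Finset.single_le_sum (f := fun j =>
      Real.exp ((∑ i, if a i j then (1 : ℝ) else 0) - 3 * t))
      (fun j _ => (Real.exp_pos _).le) (Finset.mem_univ j)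
    linarith
  push Not at hcol
  have hF := fourier_zero a h
  set P := Fintype.piFinset (fun _ : Fin m => Finset.Icc (-(n : ℤ)) n) with hP
  set F : (Fin m → ℤ) → ℝ := fun k => (∏ i, parFactor a i (π * (k i / (2 * n + 1)))) *
        ∏ j, Real.cos (π * ∑ i, if a i j then (k i / (2 * n + 1) : ℝ) else 0) with hFdef
  rw [← Finset.sum_filter_add_sum_filter_not P
    (fun k => 1 < 12 * t * ∑ i, (k i / (2 * n + 1) : ℝ) ^ 2) F] at hF
  have hfar : -∑ k ∈ farFreq m n t,
        ∏ j, |Real.cos (π * ∑ i, if a i j then (k i / (2 * n + 1) : ℝ) else 0)|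
      ≤ ∑ k ∈ P.filter (fun k => 1 < 12 * t * ∑ i, (k i / (2 * n + 1) : ℝ) ^ 2), F k := by
    rw [← Finset.sum_neg_distrib]
    refine Finset.sum_le_sum fun k _ => ?_
    refine le_trans ?_ (neg_abs_le (F k))
    rw [neg_le_neg_iff, hFdef, abs_mul, Finset.abs_prod, Finset.abs_prod]
    refine mul_le_of_le_one_left (Finset.prod_nonneg fun j _ => abs_nonneg _) ?_
    exact Finset.prod_le_one (fun i _ => abs_nonneg _) fun i _ => abs_parFactor_le a i _
  have hnear : 1 ≤ ∑ k ∈ P.filter (fun k => ¬ 1 < 12 * t * ∑ i, (k i / (2 * n + 1) : ℝ) ^ 2),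
      F k := by
    have hF0 : F 0 = 1 := by simp [hFdef, parFactor]
    refine hF0.symm.le.trans ?_
    refine Finset.single_le_sum (f := F) (fun k hk => ?_) ?_
    · rw [Finset.mem_filter, not_lt] at hk
      have hkP := Fintype.mem_piFinset.mp hk.1
      refine mul_nonneg (Finset.prod_nonneg fun i _ => ?_) (Finset.prod_nonneg fun j _ => ?_)
      · exact parFactor_nonneg a i (freq_abs_le (hkP i))
      · exact cos_nonneg_near (fun i => a i j) (fun i => (k i / (2 * n + 1) : ℝ)) (hcol j) hk.2
    · rw [Finset.mem_filter, hP, Fintype.mem_piFinset]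
      refine ⟨fun i => by simp, by simp⟩
  linarith

/-- First-moment bound on the probability that no good coloring exists. -/
lemma expect_bad {m n : ℕ} (hm : 0 < m) {p : ℝ} (h0 : 0 < p) (h1 : p ≤ 1 / 2) :
    ∑ a ∈ Finset.univ.filter (fun a : Fin m → Fin n → Bool =>
          ¬ ∃ x : Fin n → ℝ, (∀ j, x j = 1 ∨ x j = -1) ∧
            ∀ i, |∑ j, if a i j then x j else 0| ≤ 1),
        ∏ i, ∏ j, (if a i j then p else 1 - p)
      ≤ n * Real.exp (-(p * m)) + (2 * n + 1) ^ m * Real.exp (-(n / (16 * m))) := by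
  have hw : ∀ a : Fin m → Fin n → Bool, 0 ≤ ∏ i, ∏ j, (if a i j then p else 1 - p) :=
    fun a => Finset.prod_nonneg fun i _ => Finset.prod_nonneg fun j _ => by
      split_ifs <;> linarith
  set G : (Fin m → Fin n → Bool) → ℝ := fun a =>
    ∑ j, Real.exp ((∑ i, if a i j then (1 : ℝ) else 0) - 3 * (p * m)) +
      ∑ k ∈ farFreq m n (p * m),
        ∏ j, |Real.cos (π * ∑ i, if a i j then (k i / (2 * n + 1) : ℝ) else 0)| with hG
  have hG0 : ∀ a, 0 ≤ G a := fun a => add_nonneg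
    (Finset.sum_nonneg fun j _ => (Real.exp_pos _).le)
    (Finset.sum_nonneg fun k _ => Finset.prod_nonneg fun j _ => abs_nonneg _)
  have step1 : ∑ a ∈ Finset.univ.filter (fun a : Fin m → Fin n → Bool =>
          ¬ ∃ x : Fin n → ℝ, (∀ j, x j = 1 ∨ x j = -1) ∧
            ∀ i, |∑ j, if a i j then x j else 0| ≤ 1),
        ∏ i, ∏ j, (if a i j then p else 1 - p)
      ≤ ∑ a : Fin m → Fin n → Bool, (∏ i, ∏ j, (if a i j then p else 1 - p)) * G a := by
    refine (Finset.sum_le_sum fun a ha => ?_).trans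
      (Finset.sum_le_sum_of_subset_of_nonneg (Finset.filter_subset _ _)
        fun a _ _ => mul_nonneg (hw a) (hG0 a))
    exact le_mul_of_one_le_right (hw a) (one_le_of_bad (p * m) a (Finset.mem_filter.mp ha).2)
  refine step1.trans ?_
  simp only [hG, mul_add, Finset.sum_add_distrib]
  refine add_le_add ?_ ?_
  · rw [Finset.sum_congr rfl fun a _ => Finset.mul_sum _ _ _, Finset.sum_comm]
    have : ∀ j ∈ (Finset.univ : Finset (Fin n)), ∑ a : Fin m → Fin n → Bool,
        (∏ i, ∏ j, (if a i j then p else 1 - p)) *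
          Real.exp ((∑ i, if a i j then (1 : ℝ) else 0) - 3 * (p * m)) ≤ Real.exp (-(p * m)) := by
      intro j _
      have h := expect_prod_columns (m := m) p (fun j' b => if j' = j then
        Real.exp ((∑ i, if b i then (1 : ℝ) else 0) - 3 * (p * m)) else 1)
      simp only [Finset.prod_ite_eq', Finset.mem_univ, if_true] at h
      rw [h, Finset.prod_eq_single j]
      · simpa using expect_exp_col h0.le
      · intro j' _ hj'
        simp [hj', sum_colWeight]
      · simp
    refine (Finset.sum_le_sum this).trans ?_
    simp
  · rw [Finset.sum_congr rfl fun a _ => Finset.mul_sum _ _ _, Finset.sum_comm]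
    have : ∀ k ∈ farFreq m n (p * m), ∑ a : Fin m → Fin n → Bool,
        (∏ i, ∏ j, (if a i j then p else 1 - p)) *
          ∏ j, |Real.cos (π * ∑ i, if a i j then (k i / (2 * n + 1) : ℝ) else 0)|
        ≤ Real.exp (-(n / (16 * m))) := by
      intro k hk
      rw [farFreq, Finset.mem_filter, Fintype.mem_piFinset] at hk
      have h := expect_prod_columns (m := m) (n := n) p
        (fun _ b => |Real.cos (π * ∑ i, if b i then (k i / (2 * n + 1) : ℝ) else 0)|)
      rw [h, Finset.prod_const, Finset.card_univ, Fintype.card_fin]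
      calc _ ≤ (Real.exp (-(1 / (16 * m)))) ^ n := by
            refine pow_le_pow_left₀ (Finset.sum_nonneg fun b _ =>
              mul_nonneg (colWeight_nonneg h0.le h1 b) (abs_nonneg _)) ?_ n
            exact expect_abs_cos_far hm h0 h1 _ (fun i => freq_abs_le (hk.1 i)) hk.2
        _ = _ := by rw [← Real.exp_nat_mul]; congr 1; ring
    refine (Finset.sum_le_sum this).trans ?_
    rw [Finset.sum_const, nsmul_eq_mul]
    gcongr
    have hc : (farFreq m n (p * m)).card ≤ (2 * n + 1) ^ m := by
      refine (Finset.card_filter_le _ _).trans ?_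
      rw [Fintype.card_piFinset]
      simp only [Int.card_Icc, Finset.prod_const, Finset.card_univ, Fintype.card_fin]
      apply le_of_eq; congr 1; omega
    exact_mod_cast hc

/-! ### Parameter estimates -/

/-- The hypothesis `n ≥ C m² log m` self-improves to `log n` in place of `log m`: this is clear if
`n ≤ m⁶`, and otherwise `√n ≥ m³` and `log n ≤ 2 √n` suffice. -/
lemma log_growth {C : ℝ} (hC : 2 ≤ C) {m n : ℕ} (hm : 0 < m) (hn : 2 ≤ n)
    (h1 : (n : ℝ) ≥ C * m ^ 2 * Real.log m) (h2 : C ≤ m) :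
    C / 6 * m ^ 2 * Real.log n ≤ n := by
  have hm' : (1 : ℝ) ≤ m := by exact_mod_cast hm
  have hn' : (2 : ℝ) ≤ n := by exact_mod_cast hn
  have hn0 : (0 : ℝ) < n := by linarith
  by_cases hc : Real.log n ≤ 6 * Real.log m
  · calc C / 6 * m ^ 2 * Real.log n ≤ C / 6 * m ^ 2 * (6 * Real.log m) := by gcongr
      _ = C * m ^ 2 * Real.log m := by ring
      _ ≤ n := h1
  · push Not at hc
    have h6 : (m : ℝ) ^ 6 ≤ n := by
      have : Real.log ((m : ℝ) ^ 6) < Real.log n := by rw [Real.log_pow]; exact_mod_cast hc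
      exact ((Real.log_lt_log_iff (by positivity) hn0).mp this).le
    have hs : Real.sqrt n * Real.sqrt n = n := Real.mul_self_sqrt hn0.le
    have h3 : (m : ℝ) ^ 3 ≤ Real.sqrt n := by
      apply Real.le_sqrt_of_sq_le; rw [← pow_mul]; exact h6
    have hl : Real.log n ≤ 2 * Real.sqrt n := by
      have h := Real.log_le_sub_one_of_pos (Real.sqrt_pos.mpr hn0)
      rw [Real.log_sqrt hn0.le] at h
      linarith
    have hsn := Real.sqrt_nonneg n
    calc C / 6 * m ^ 2 * Real.log n ≤ m / 6 * m ^ 2 * (2 * Real.sqrt n) := by gcongr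
      _ = (m : ℝ) ^ 3 * Real.sqrt n / 3 := by ring
      _ ≤ Real.sqrt n * Real.sqrt n / 3 := by gcongr
      _ ≤ n := by rw [hs]; linarith

lemma final_bound {k : ℝ} (hk : 0 < k) {m n : ℕ} (hm : 0 < m) (hn : 2 ≤ n) {p : ℝ}
    (h1 : (96 * (k + 5)) / 6 * m ^ 2 * Real.log n ≤ n)
    (h2 : p * m ≥ 96 * (k + 5) * Real.log n) :
    n * Real.exp (-(p * m)) + (2 * n + 1) ^ m * Real.exp (-(n / (16 * m)))
      ≤ (n : ℝ) ^ (-k) := by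
  have hm' : (1 : ℝ) ≤ m := by exact_mod_cast hm
  have hn' : (2 : ℝ) ≤ n := by exact_mod_cast hn
  have hn0 : (0 : ℝ) < n := by linarith
  have hL2 : Real.log 2 ≤ Real.log n := Real.log_le_log (by norm_num) hn'
  have hL0 : 0 < Real.log n := Real.log_pos (by linarith)
  have hhalf : (n : ℝ) ^ (-k) / 2 = Real.exp (-(k * Real.log n) - Real.log 2) := by
    rw [Real.exp_sub, Real.exp_log (by norm_num), Real.rpow_def_of_pos hn0]
    congr 2; ring
  have hA : n * Real.exp (-(p * m)) ≤ (n : ℝ) ^ (-k) / 2 := by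
    rw [hhalf]
    nth_rewrite 1 [← Real.exp_log hn0]
    rw [← Real.exp_add, Real.exp_le_exp]
    nlinarith
  have hB : (2 * n + 1) ^ m * Real.exp (-(n / (16 * m))) ≤ (n : ℝ) ^ (-k) / 2 := by
    rw [hhalf]
    have h3 : (2 * n + 1 : ℝ) ≤ Real.exp (3 * Real.log n) := by
      have : Real.exp (3 * Real.log n) = (n : ℝ) ^ 3 := by
        rw [show 3 * Real.log n = ((3 : ℕ) : ℝ) * Real.log n by norm_num, Real.exp_nat_mul,
          Real.exp_log hn0]
      rw [this]
      nlinarith [sq_nonneg ((n : ℝ) - 2)]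
    have h4 : (2 * n + 1 : ℝ) ^ m ≤ Real.exp (m * (3 * Real.log n)) := by
      rw [Real.exp_nat_mul]; gcongr
    have h5 : (k + 5) * (m * Real.log n) ≤ n / (16 * m) := by
      rw [le_div_iff₀ (by positivity)]
      calc _ = (96 * (k + 5)) / 6 * m ^ 2 * Real.log n := by ring
        _ ≤ n := h1
    calc _ ≤ Real.exp (m * (3 * Real.log n)) * Real.exp (-(n / (16 * m))) := by gcongr
      _ ≤ _ := by
        rw [← Real.exp_add, Real.exp_le_exp]
        have : Real.log n ≤ m * Real.log n := le_mul_of_one_le_left hL0.le hm'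
        nlinarith
  linarith

end RandomDisc

/-- For every `k > 0` there is `C > 0` such that: if `n ≥ C m² log m`,
`t = pm ≥ C log n`, `p ∈ [0,1/2]`, and `A ∈ {0,1}^{m×n}` has independent
`Bernoulli(p)` entries, then with probability at least `1 - n^{-k}` there is a
coloring `x ∈ {-1,1}^n` with `‖Ax‖_∞ ≤ 1`. The probability is written as the sum
of the product-Bernoulli weights of the matrices `a` admitting such a coloring. -/
theorem stmt_0 (k : ℝ) (hk : 0 < k) : ∃ C : ℝ, 0 < C ∧
    ∀ (m n : ℕ), 0 < m → 0 < n → ∀ p : ℝ, 0 ≤ p → p ≤ 1 / 2 →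
    (n : ℝ) ≥ C * m ^ 2 * Real.log m →
    p * m ≥ C * Real.log n →
    ∑ a ∈ Finset.univ.filter (fun a : Fin m → Fin n → Bool =>
          ∃ x : Fin n → ℝ, (∀ j, x j = 1 ∨ x j = -1) ∧
            ∀ i, |∑ j, if a i j then x j else 0| ≤ 1),
        ∏ i, ∏ j, (if a i j then p else 1 - p) ≥
      1 - (n : ℝ) ^ (-k) := by
  refine ⟨96 * (k + 5), by positivity, ?_⟩
  intro m n hm hn p hp0 hp1 h1 h2
  have hw : ∀ a : Fin m → Fin n → Bool, 0 ≤ ∏ i, ∏ j, (if a i j then p else 1 - p) :=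
    fun a => Finset.prod_nonneg fun i _ => Finset.prod_nonneg fun j _ => by
      split_ifs <;> linarith
  -- For `n = 1` the claimed lower bound is `0`.
  rcases Nat.lt_or_ge n 2 with hn2 | hn2
  · have : n = 1 := by omega
    subst this
    simpa using Finset.sum_nonneg fun a _ => hw a
  have hm' : (1 : ℝ) ≤ m := by exact_mod_cast hm
  have hn' : (2 : ℝ) ≤ n := by exact_mod_cast hn2
  have hL : 1 / 2 ≤ Real.log n :=
    (by linarith [Real.log_two_gt_d9] : 1 / 2 ≤ Real.log 2).trans
      (Real.log_le_log (by norm_num) hn')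
  have hpm : 0 < p * m := lt_of_lt_of_le (by positivity) h2
  have hp : 0 < p := pos_of_mul_pos_left hpm (by positivity)
  -- Since `p ≤ 1/2` and `n ≥ 2`, the hypothesis on `p m` forces `m` to be large.
  have hCm : 96 * (k + 5) ≤ m := by nlinarith
  have hbad := (RandomDisc.expect_bad (n := n) hm hp hp1).trans
    (RandomDisc.final_bound hk hm hn2
      (RandomDisc.log_growth (by linarith) hm hn2 h1 hCm) h2)
  have htot : ∑ a : Fin m → Fin n → Bool, ∏ i, ∏ j, (if a i j then p else 1 - p) = 1 := by
    have h := RandomDisc.expect_prod_columns (m := m) (n := n) p (fun _ _ => 1)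
    simpa [RandomDisc.sum_colWeight] using h
  rw [← Finset.sum_filter_add_sum_filter_not Finset.univ (fun a : Fin m → Fin n → Bool =>
          ∃ x : Fin n → ℝ, (∀ j, x j = 1 ∨ x j = -1) ∧
            ∀ i, |∑ j, if a i j then x j else 0| ≤ 1)] at htot
  linarith
end

section
/- For every positive integer Δ and every real θ with |θ| ≤ 1/4, one has (1/2 + (1/2)·cos(2πθ))^Δ ≥ exp(-π²·Δ·θ² - 20·Δ·θ⁴). -/
open Real

/-!
Since `1/2 + 1/2 * cos (2πθ) = cos (πθ) ^ 2`, it suffices to show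
`exp (-(π²θ² + 20θ⁴)/2) ≤ cos (πθ)`, and then raise to the power `2Δ`. With `w = (πθ)² ≤ 0.61686`
and `20/π⁴ ≥ 0.205`, the exponent satisfies `(π²θ² + 20θ⁴)/2 ≥ v := w/2 + 0.1025 w²`. Bounding
`exp v` below by its cubic Taylor polynomial and `cos` below by its Taylor polynomial of degree 6
(`cos_ge_sextic`) reduces `1 ≤ exp v * cos (πθ)` to a polynomial inequality in `w` (`poly_ineq`).
The inequality is nearly tight at `θ = 1/4` (there `0.6950` against `log 2 = 0.6931`), which is why
this many Taylor terms and digits of `π` are used.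
-/

lemma nonneg_of_deriv_nonneg {f f' : ℝ → ℝ} (hf : ∀ x, HasDerivAt f (f' x) x)
    (h0 : f 0 = 0) (h' : ∀ x, 0 ≤ x → 0 ≤ f' x) {x : ℝ} (hx : 0 ≤ x) : 0 ≤ f x := by
  have hmono : MonotoneOn f (Set.Ici 0) := by
    apply monotoneOn_of_deriv_nonneg (convex_Ici 0)
    · exact fun y _ => (hf y).continuousAt.continuousWithinAt
    · exact fun y _ => (hf y).differentiableAt.differentiableWithinAt
    · intro y hy
      rw [(hf y).deriv]
      exact h' y (interior_subset hy)
  simpa [h0] using hmono (Set.self_mem_Ici) hx hx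

lemma cos_le_quartic {x : ℝ} (hx : 0 ≤ x) : cos x ≤ 1 - x ^ 2 / 2 + x ^ 4 / 24 := by
  have := nonneg_of_deriv_nonneg (f := fun x => 1 - x ^ 2 / 2 + x ^ 4 / 24 - cos x)
    (f' := fun x => sin x - (x - x ^ 3 / 6))
    (fun x => by
      refine HasDerivAt.congr_deriv ((((hasDerivAt_const x (1 : ℝ)).sub ((hasDerivAt_pow 2 x).div_const 2)).add
        ((hasDerivAt_pow 4 x).div_const 24)).sub (hasDerivAt_cos x)) ?_
      push_cast; ring)
    (by norm_num) (fun x hx => sub_nonneg.2 (sin_ge_sub_cube hx)) hx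
  linarith

lemma sin_le_quintic {x : ℝ} (hx : 0 ≤ x) : sin x ≤ x - x ^ 3 / 6 + x ^ 5 / 120 := by
  have := nonneg_of_deriv_nonneg (f := fun x => x - x ^ 3 / 6 + x ^ 5 / 120 - sin x)
    (f' := fun x => 1 - x ^ 2 / 2 + x ^ 4 / 24 - cos x)
    (fun x => by
      refine HasDerivAt.congr_deriv ((((hasDerivAt_id x).sub ((hasDerivAt_pow 3 x).div_const 6)).add
        ((hasDerivAt_pow 5 x).div_const 120)).sub (hasDerivAt_sin x)) ?_
      push_cast; ring)
    (by norm_num) (fun x hx => sub_nonneg.2 (cos_le_quartic hx)) hx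
  linarith

lemma cos_ge_sextic {x : ℝ} (hx : 0 ≤ x) :
    1 - x ^ 2 / 2 + x ^ 4 / 24 - x ^ 6 / 720 ≤ cos x := by
  have := nonneg_of_deriv_nonneg (f := fun x => cos x - (1 - x ^ 2 / 2 + x ^ 4 / 24 - x ^ 6 / 720))
    (f' := fun x => x - x ^ 3 / 6 + x ^ 5 / 120 - sin x)
    (fun x => by
      refine HasDerivAt.congr_deriv ((hasDerivAt_cos x).sub ((((hasDerivAt_const x (1 : ℝ)).sub
        ((hasDerivAt_pow 2 x).div_const 2)).add ((hasDerivAt_pow 4 x).div_const 24)).sub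
        ((hasDerivAt_pow 6 x).div_const 720))) ?_
      push_cast; ring)
    (by norm_num) (fun x hx => sub_nonneg.2 (sin_le_quintic hx)) hx
  linarith

lemma poly_ineq {w : ℝ} (h0 : 0 ≤ w) (h1 : w ≤ 0.61686) :
    1 ≤ (1 + (w / 2 + 0.1025 * w ^ 2) + (w / 2 + 0.1025 * w ^ 2) ^ 2 / 2
      + (w / 2 + 0.1025 * w ^ 2) ^ 3 / 6) * (1 - w / 2 + w ^ 2 / 24 - w ^ 3 / 720) := by
  -- Minus `1`, the product is `w ^ 2 * Q w` with `Q 0 > 0` and all other coefficients of `Q`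
  -- negative except that of `w ^ 6`, so `w ^ k` may be replaced by `0.61686 ^ k` for `k ≠ 6`.
  have h (k : ℕ) : 0 ≤ w ^ 2 * (0.61686 ^ k - w ^ k) :=
    mul_nonneg (sq_nonneg w) (sub_nonneg.2 (pow_le_pow_left₀ h0 h1 k))
  linarith [h 1, h 2, h 3, h 4, h 5, h 7, sq_nonneg w, pow_nonneg h0 8]

/-- The estimate for a single factor, before squaring. -/
lemma exp_le_cos {θ : ℝ} (h0 : 0 ≤ θ) (h1 : θ ≤ 1 / 4) :
    exp (-(π ^ 2 * θ ^ 2 + 20 * θ ^ 4) / 2) ≤ cos (π * θ) := by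
  have hpi := pi_pos
  have hpi' := pi_lt_d6
  have hpi2 : π ^ 2 ≤ 9.86966 := by nlinarith
  have hw : (π * θ) ^ 2 ≤ 0.61686 := by
    rw [mul_pow]
    calc π ^ 2 * θ ^ 2 ≤ 9.86966 * (1 / 4) ^ 2 := by gcongr
      _ ≤ 0.61686 := by norm_num
  have hpi4 : 0.205 * π ^ 4 ≤ 20 := by nlinarith [sq_nonneg π]
  set w := (π * θ) ^ 2 with hwdef
  have hw0 : 0 ≤ w := sq_nonneg _
  set v := w / 2 + 0.1025 * w ^ 2 with hv
  have hv0 : 0 ≤ v := by positivity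
  have hvle : v ≤ (π ^ 2 * θ ^ 2 + 20 * θ ^ 4) / 2 := by
    have := mul_le_mul_of_nonneg_right hpi4 (by positivity : 0 ≤ θ ^ 4)
    rw [hv, hwdef]
    nlinarith
  have hexp : 1 + v + v ^ 2 / 2 + v ^ 3 / 6 ≤ exp v := by
    have := sum_le_exp_of_nonneg hv0 4
    norm_num [Finset.sum_range_succ, Nat.factorial] at this
    linarith
  have hcos : 1 - w / 2 + w ^ 2 / 24 - w ^ 3 / 720 ≤ cos (π * θ) := by
    have := cos_ge_sextic (x := π * θ) (by positivity)
    rw [hwdef]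
    linarith
  have hpoly := poly_ineq hw0 hw
  rw [← hv] at hpoly
  have hprod : 1 ≤ exp v * cos (π * θ) := by
    have hE : 0 ≤ 1 + v + v ^ 2 / 2 + v ^ 3 / 6 := by positivity
    have hcospos : 0 ≤ cos (π * θ) :=
      cos_nonneg_of_neg_pi_div_two_le_of_le (by nlinarith) (by nlinarith)
    calc 1 ≤ _ := hpoly
      _ ≤ (1 + v + v ^ 2 / 2 + v ^ 3 / 6) * cos (π * θ) := by gcongr
      _ ≤ _ := by gcongr
  calc exp (-(π ^ 2 * θ ^ 2 + 20 * θ ^ 4) / 2) ≤ exp (-v) := exp_le_exp.2 (by linarith)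
    _ ≤ exp (-v) * (exp v * cos (π * θ)) := le_mul_of_one_le_right (exp_pos _).le hprod
    _ = cos (π * θ) := by rw [← mul_assoc, ← exp_add]; simp

theorem stmt_3 (Δ : ℕ) (hΔ : 0 < Δ) (θ : ℝ) (hθ : |θ| ≤ 1 / 4) :
    (1 / 2 + 1 / 2 * Real.cos (2 * π * θ)) ^ Δ ≥
      Real.exp (-π ^ 2 * Δ * θ ^ 2 - 20 * Δ * θ ^ 4) := by
  have key := exp_le_cos (abs_nonneg θ) hθ
  have h4 : |θ| ^ 4 = θ ^ 4 := Even.pow_abs (by decide) θ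
  have habs : cos (π * |θ|) = cos (π * θ) := by
    rw [← cos_abs (π * θ), abs_mul, abs_of_pos pi_pos]
  rw [sq_abs, h4, habs] at key
  have hsq : 1 / 2 + 1 / 2 * cos (2 * π * θ) = cos (π * θ) ^ 2 := by
    rw [mul_assoc, cos_two_mul]; ring
  have hexp : exp (-π ^ 2 * Δ * θ ^ 2 - 20 * Δ * θ ^ 4)
      = (exp (-(π ^ 2 * θ ^ 2 + 20 * θ ^ 4) / 2) ^ 2) ^ Δ := by
    rw [← exp_nat_mul, ← exp_nat_mul]
    congr 1
    push_cast
    ring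
  rw [ge_iff_le, hsq, hexp]
  gcongr
end

section
/- For every positive integers m and Δ and every θ ∈ ℝ^m with ‖θ‖_∞ ≤ 1/4, one has ĝ_Δ(θ) ≥ exp(-π²·Δ·‖θ‖₂² - 20·Δ·‖θ‖₂⁴). -/
/-!
Each factor equals `cos (π t) ^ 2`, and since `∑ θᵢ⁴ ≤ (∑ θᵢ²)²` it suffices to prove the
one-variable bound `cos (π t) ^ 2 ≥ exp (-π² t² - 20 t⁴)` for `|t| ≤ 1 / 4` (`one_var`), then raise
it to the power `Δ` and multiply over the coordinates.

For the one-variable bound put `u = (π t)²` and `q = u / 2 + 0.1026 u²`. As `0.1026 ≤ 10 / π⁴`, the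
claim follows from `cos (π t) * exp q ≥ 1`. Here the cosine is at least
`1 - u / 2 + u² / 24 - u³ / 720` (`cos_lower`), and `exp q` is at least its Taylor polynomial of
degree four, so only a polynomial inequality in `u ∈ [0, 0.617]` remains (`poly_ineq`).
-/

open Real

/-- Integration of an inequality on the half-line, used to climb up the Taylor bounds for
`sin` and `cos`. -/
theorem nonneg_of_deriv {f f' : ℝ → ℝ} (h0 : f 0 = 0) (hf : ∀ x, HasDerivAt f (f' x) x)
    (hf' : ∀ x, 0 ≤ x → 0 ≤ f' x) {x : ℝ} (hx : 0 ≤ x) : 0 ≤ f x := by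
  have hm : MonotoneOn f (Set.Ici 0) := by
    apply monotoneOn_of_deriv_nonneg (convex_Ici 0)
    · exact fun y _ => (hf y).continuousAt.continuousWithinAt
    · exact fun y _ => (hf y).differentiableAt.differentiableWithinAt
    · intro y hy
      rw [interior_Ici] at hy
      rw [(hf y).deriv]
      exact hf' y (le_of_lt hy)
  have := hm (Set.mem_Ici.2 le_rfl) (Set.mem_Ici.2 hx) hx
  rwa [h0] at this

theorem cos_upper {x : ℝ} (hx : 0 ≤ x) : 0 ≤ 1 - x ^ 2 / 2 + x ^ 4 / 24 - cos x := by
  refine nonneg_of_deriv (f := fun x => 1 - x ^ 2 / 2 + x ^ 4 / 24 - cos x)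
    (f' := fun x => sin x - (x - x ^ 3 / 6)) (by simp) (fun y => ?_)
    (fun y hy => sub_nonneg.2 (sin_ge_sub_cube hy)) hx
  have h := ((((hasDerivAt_id y).pow 2).div_const 2).const_sub 1).add
    (((hasDerivAt_id y).pow 4).div_const 24) |>.sub (hasDerivAt_cos y)
  refine h.congr_deriv ?_
  simp only [id_eq]
  norm_num
  ring

theorem sin_upper {x : ℝ} (hx : 0 ≤ x) : 0 ≤ x - x ^ 3 / 6 + x ^ 5 / 120 - sin x := by
  refine nonneg_of_deriv (f := fun x => x - x ^ 3 / 6 + x ^ 5 / 120 - sin x)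
    (f' := fun x => 1 - x ^ 2 / 2 + x ^ 4 / 24 - cos x) (by simp) (fun y => ?_)
    (fun y hy => cos_upper hy) hx
  have h := (((hasDerivAt_id y).sub (((hasDerivAt_id y).pow 3).div_const 6)).add
    (((hasDerivAt_id y).pow 5).div_const 120)).sub (hasDerivAt_sin y)
  refine h.congr_deriv ?_
  simp only [id_eq]
  norm_num
  ring

theorem cos_lower {x : ℝ} (hx : 0 ≤ x) :
    0 ≤ cos x - (1 - x ^ 2 / 2 + x ^ 4 / 24 - x ^ 6 / 720) := by
  refine nonneg_of_deriv (f := fun x => cos x - (1 - x ^ 2 / 2 + x ^ 4 / 24 - x ^ 6 / 720))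
    (f' := fun x => x - x ^ 3 / 6 + x ^ 5 / 120 - sin x) (by simp) (fun y => ?_)
    (fun y hy => sin_upper hy) hx
  have h := (hasDerivAt_cos y).sub (((((hasDerivAt_id y).pow 2).div_const 2).const_sub 1).add
    (((hasDerivAt_id y).pow 4).div_const 24) |>.sub (((hasDerivAt_id y).pow 6).div_const 720))
  refine h.congr_deriv ?_
  simp only [id_eq]
  norm_num
  ring

/-- With `u = (π t)²`, this says that the Taylor lower bound for `cos (π t)` times the Taylor lower
bound for `exp q` is at least `1`. The constants are delicate: `0.617` is just above `(π / 4)²`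
and `0.1026` just below `10 / π⁴`, and the desired estimate is nearly an equality at the
endpoint `t = 1 / 4`. -/
theorem poly_ineq_s5 {u q : ℝ} (hu0 : 0 ≤ u) (hu : u ≤ 0.617) (hq : q = u / 2 + 0.1026 * u ^ 2) :
    1 ≤ (1 - u / 2 + u ^ 2 / 24 - u ^ 3 / 720) *
      (1 + q + q ^ 2 / 2 + q ^ 3 / 6 + q ^ 4 / 24) := by
  subst hq
  -- The difference of the two sides is `u ^ 2 * E u`, where `E` has positive constant term and
  -- its only other positive coefficients are those of `u ^ 7` and `u ^ 8`.
  have hk (k : ℕ) : 0 ≤ u ^ 2 * (0.617 ^ k - u ^ k) :=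
    mul_nonneg (sq_nonneg u) (sub_nonneg.2 (pow_le_pow_left₀ hu0 hu k))
  have h1 := hk 1
  have h2 := hk 2
  have h3 := hk 3
  have h4 := hk 4
  have h5 := hk 5
  have h6 := hk 6
  have h9 := hk 9
  linarith [pow_nonneg hu0 2, pow_nonneg hu0 9, pow_nonneg hu0 10]

/-- The one-coordinate estimate, with `1 / 2 + cos (2 π t) / 2 = cos (π t) ^ 2`. -/
theorem one_var {t : ℝ} (ht : |t| ≤ 1 / 4) :
    exp (-π ^ 2 * t ^ 2 - 20 * t ^ 4) ≤ 1 / 2 + 1 / 2 * cos (2 * π * t) := by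
  have hp := pi_pos
  have hp4 := pi_lt_d4
  have hp2 : π ^ 2 ≤ 9.8697 := by nlinarith
  have hpp : π ^ 4 ≤ 97.42 := by nlinarith [sq_nonneg π]
  have ht2 : t ^ 2 ≤ 1 / 16 := by
    have := sq_abs t
    nlinarith [abs_nonneg t]
  obtain ⟨u, hu⟩ : ∃ u, u = π ^ 2 * t ^ 2 := ⟨_, rfl⟩
  obtain ⟨q, hq⟩ : ∃ q, q = u / 2 + 0.1026 * u ^ 2 := ⟨_, rfl⟩
  have hu0 : 0 ≤ u := by rw [hu]; positivity
  have hu1 : u ≤ 0.617 := by rw [hu]; nlinarith [sq_nonneg t]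
  have hq0 : 0 ≤ q := by rw [hq]; positivity
  have hcos : 1 - u / 2 + u ^ 2 / 24 - u ^ 3 / 720 ≤ cos (π * t) := by
    have h := cos_lower (abs_nonneg (π * t))
    rw [cos_abs] at h
    have e2 : |π * t| ^ 2 = u := by rw [sq_abs, hu]; ring
    have e4 : |π * t| ^ 4 = u ^ 2 := by rw [← e2]; ring
    have e6 : |π * t| ^ 6 = u ^ 3 := by rw [← e2]; ring
    rw [e2, e4, e6] at h
    linarith
  have hexp : 1 + q + q ^ 2 / 2 + q ^ 3 / 6 + q ^ 4 / 24 ≤ exp q := by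
    have h := sum_le_exp_of_nonneg hq0 5
    simp [Finset.sum_range_succ, Nat.factorial] at h
    linarith
  have hc0 : 0 ≤ 1 - u / 2 + u ^ 2 / 24 - u ^ 3 / 720 := by
    nlinarith [pow_le_pow_left₀ hu0 hu1 3, sq_nonneg u]
  have hcos0 : 0 ≤ cos (π * t) := hc0.trans hcos
  have hmain : exp (-q) ≤ cos (π * t) := by
    rw [exp_neg, inv_le_iff_one_le_mul₀ (exp_pos q)]
    calc (1 : ℝ) ≤ _ := poly_ineq_s5 hu0 hu1 hq
      _ ≤ cos (π * t) * exp q := by gcongr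
  -- This is where `0.1026 ≤ 10 / π ^ 4` enters, through `π ^ 4 ≤ 97.42`.
  have hle : -π ^ 2 * t ^ 2 - 20 * t ^ 4 ≤ -q + -q := by
    rw [hq, hu]
    have : π ^ 4 * t ^ 4 ≤ 97.42 * t ^ 4 := by gcongr
    nlinarith [show 0 ≤ t ^ 4 by positivity]
  have hsq : 1 / 2 + 1 / 2 * cos (2 * π * t) = cos (π * t) * cos (π * t) := by
    rw [mul_assoc, cos_two_mul]; ring
  rw [hsq]
  calc _ ≤ exp (-q + -q) := exp_le_exp.2 hle
    _ = exp (-q) * exp (-q) := exp_add _ _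
    _ ≤ _ := by gcongr

/-- `ĝ_Δ(θ) ≥ exp(-π²·Δ·‖θ‖₂² - 20·Δ·‖θ‖₂⁴)` for `‖θ‖_∞ ≤ 1/4`.
Here `‖θ‖` is the sup norm on `Fin m → ℝ` and `∑ i, θ i ^ 2 = ‖θ‖₂²`. -/
theorem stmt_5 (m Δ : ℕ) (hm : 0 < m) (hΔ : 0 < Δ) (θ : Fin m → ℝ) (hθ : ‖θ‖ ≤ 1 / 4) :
    ∏ i, (1 / 2 + 1 / 2 * Real.cos (2 * π * θ i)) ^ Δ ≥
      Real.exp (-π ^ 2 * Δ * ∑ i, θ i ^ 2 - 20 * Δ * (∑ i, θ i ^ 2) ^ 2) := by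
  have h4 : ∑ i, θ i ^ 4 ≤ (∑ i, θ i ^ 2) ^ 2 := by
    have h := Finset.sum_sq_le_sq_sum_of_nonneg (s := Finset.univ) (f := fun i => θ i ^ 2)
      (fun i _ => sq_nonneg _)
    simpa [← pow_mul] using h
  calc Real.exp (-π ^ 2 * Δ * ∑ i, θ i ^ 2 - 20 * Δ * (∑ i, θ i ^ 2) ^ 2)
      ≤ Real.exp (-π ^ 2 * Δ * ∑ i, θ i ^ 2 - 20 * Δ * ∑ i, θ i ^ 4) := by gcongr
    _ = ∏ i, Real.exp (-π ^ 2 * θ i ^ 2 - 20 * θ i ^ 4) ^ Δ := by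
      simp_rw [← Real.exp_nat_mul]
      rw [← Real.exp_sum, Finset.mul_sum, Finset.mul_sum, ← Finset.sum_sub_distrib]
      congr 1
      exact Finset.sum_congr rfl fun i _ => by ring
    _ ≤ _ := by
      gcongr with i
      exact one_var ((norm_le_pi_norm θ i).trans hθ)
end

section
/- For every positive integers m and Δ, every θ ∈ ℝ^m with ‖θ‖_∞ ≤ 1/8, and every s ∈ {-1/2, 0, 1/2}^m, one has ĝ_Δ(θ + s) ≤ ĝ_Δ(θ) · ∏_{i : s_i ≠ 0} (32·θ_i²)^Δ. -/
/-!
Both sides are products over the coordinates, so it suffices to compare factors. Where `s i = 0`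
the factors agree. Where `s i = ± 1/2`, the shift turns `cos (2πt)` into `-cos (2πt)`, and
`(1 - cos (2πt)) / 2 ≤ π² t² ≤ 16 t²`, while `(1 + cos (2πt)) / 2 ≥ 1/2` because `|t| ≤ 1/8`
keeps the cosine nonnegative; this is `half_sub_cos_le`.
-/


open Real
lemma half_sub_cos_le (t : ℝ) (ht : |t| ≤ 1 / 8) :
    1 / 2 - 1 / 2 * Real.cos (2 * π * t) ≤
      (1 / 2 + 1 / 2 * Real.cos (2 * π * t)) * (32 * t ^ 2) := by
  obtain ⟨h1, h2⟩ := abs_le.mp ht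
  have hpos := Real.pi_pos
  have hcos : 0 ≤ Real.cos (2 * π * t) :=
    Real.cos_nonneg_of_mem_Icc ⟨by nlinarith, by nlinarith⟩
  have hquad := Real.one_sub_sq_div_two_le_cos (x := 2 * π * t)
  have hpi : π ^ 2 ≤ 16 := by nlinarith [Real.pi_le_four]
  nlinarith [mul_nonneg hcos (sq_nonneg t), mul_le_mul_of_nonneg_right hpi (sq_nonneg t)]

/-- For `‖θ‖_∞ ≤ 1/8` (sup norm on `Fin m → ℝ`) and half-integral `s`,
`ĝ_Δ(θ+s) ≤ ĝ_Δ(θ) · ∏_{i : s_i ≠ 0} (32 θ_i²)^Δ`. -/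
theorem stmt_6 (m Δ : ℕ) (hm : 0 < m) (hΔ : 0 < Δ) (θ : Fin m → ℝ) (hθ : ‖θ‖ ≤ 1 / 8)
    (s : Fin m → ℝ) (hs : ∀ i, s i = -(1 / 2) ∨ s i = 0 ∨ s i = 1 / 2) :
    ∏ i, (1 / 2 + 1 / 2 * Real.cos (2 * π * (θ i + s i))) ^ Δ ≤
      (∏ i, (1 / 2 + 1 / 2 * Real.cos (2 * π * θ i)) ^ Δ) *
        ∏ i ∈ Finset.univ.filter fun i => s i ≠ 0, (32 * θ i ^ 2) ^ Δ := by
  have hnonneg : ∀ x : ℝ, 0 ≤ 1 / 2 + 1 / 2 * Real.cos x := fun x => by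
    linarith [Real.neg_one_le_cos x]
  rw [Finset.prod_filter, ← Finset.prod_mul_distrib]
  refine Finset.prod_le_prod (fun i _ => pow_nonneg (hnonneg _) _) fun i _ => ?_
  have hi : |θ i| ≤ 1 / 8 := (norm_le_pi_norm θ i).trans hθ
  by_cases h0 : s i = 0
  · simp [h0]
  · rw [if_pos h0, ← mul_pow]
    refine pow_le_pow_left₀ (hnonneg _) ?_ Δ
    have hshift : Real.cos (2 * π * (θ i + s i)) = -Real.cos (2 * π * θ i) := by
      rcases hs i with h | h | h
      · rw [h, ← Real.cos_sub_pi]; congr 1; ring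
      · exact absurd h h0
      · rw [h, ← Real.cos_add_pi]; congr 1; ring
    rw [hshift]
    linarith [half_sub_cos_le (θ i) hi]
end

section
/- There exists a constant c > 0 with the following property. Let m, n be positive integers, let t ≥ 1 be real, and let A ∈ {0,1}^{m×n} be a matrix all of whose columns A^j satisfy ‖A^j‖₂ ≤ 2√t. Then for every θ ∈ ℝ^m with ‖θ‖₂ ≤ 1/(16√t): every factor cos(2π·⟨A^j,θ⟩) is strictly positive, and |log(∏_{j=1}^n cos(2π·⟨A^j,θ⟩)) + 2π²·θᵀ(AAᵀ)θ| ≤ c·n·t²·‖θ‖₂⁴. -/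
open Real Matrix

/-!
Write `s_j = ⟨A^j, θ⟩` and `x_j = 2π s_j`. Cauchy–Schwarz gives `s_j² ≤ 4t‖θ‖²`, hence
`|s_j| ≤ 1/8` and `|x_j| ≤ π/4 < 1`, so every cosine is positive. Since
`θᵀ(AAᵀ)θ = ∑ s_j²`, the quantity to be bounded is `∑ (log cos x_j + x_j²/2)`. Each summand is
at most `x_j⁴/2 ≤ 128π⁴t²‖θ‖⁴` in absolute value by `abs_log_cos_add_le`, which yields
`c = 128π⁴`.
-/

/-- The second order Taylor estimate for `log cos`: with `u = 1 - cos x ≤ x²/2`, both bounds come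
from `1 - 1/y ≤ log y ≤ y - 1`, the lower one through `1/(1-u) - 1 = u + u²/(1-u) ≤ u + 2u²`. -/
lemma abs_log_cos_add_le {x : ℝ} (hx : |x| ≤ 1) :
    0 < Real.cos x ∧ |Real.log (Real.cos x) + x ^ 2 / 2| ≤ x ^ 4 / 2 := by
  have hx2 : x ^ 2 ≤ 1 := (sq_le_one_iff_abs_le_one x).2 hx
  have hlow : 1 - x ^ 2 / 2 ≤ Real.cos x := Real.one_sub_sq_div_two_le_cos
  have hpos : 0 < Real.cos x := by linarith
  refine ⟨hpos, ?_⟩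
  have hb := abs_le.1 (Real.cos_bound hx)
  have h4 : |x| ^ 4 = x ^ 4 := by
    rw [show 4 = 2 * 2 by norm_num, pow_mul, sq_abs, ← pow_mul]
  rw [h4] at hb
  have hx4 : 0 ≤ x ^ 4 := by positivity
  have hup : Real.log (Real.cos x) ≤ Real.cos x - 1 := Real.log_le_sub_one_of_pos hpos
  have hlo : 1 - (Real.cos x)⁻¹ ≤ Real.log (Real.cos x) := Real.one_sub_inv_le_log_of_pos hpos
  have hinv : (Real.cos x)⁻¹ ≤ 1 + x ^ 2 / 2 + x ^ 4 / 2 := by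
    rw [inv_le_iff_one_le_mul₀ hpos]
    calc (1 : ℝ) ≤ (1 + x ^ 2 / 2 + x ^ 4 / 2) * (1 - x ^ 2 / 2) := by
          nlinarith [mul_nonneg hx4 (sub_nonneg.2 hx2)]
      _ ≤ (1 + x ^ 2 / 2 + x ^ 4 / 2) * Real.cos x := by gcongr
  rw [abs_le]
  constructor <;> linarith [hb.1, hb.2]

lemma dotProduct_mul_transpose_mulVec {m n : ℕ} (A : Matrix (Fin m) (Fin n) ℝ) (θ : Fin m → ℝ) :
    θ ⬝ᵥ (A * Aᵀ) *ᵥ θ = ∑ j, (∑ i, A i j * θ i) ^ 2 := by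
  rw [← Matrix.mulVec_mulVec, Matrix.dotProduct_mulVec, ← Matrix.mulVec_transpose]
  simp [dotProduct, Matrix.mulVec, sq]

/-- There is `c > 0` such that for `A ∈ {0,1}^{m×n}` with columns of ℓ₂-norm at most
`2√t` (`t ≥ 1`) and `‖θ‖₂ ≤ 1/(16√t)`: every factor `cos(2π⟨A^j,θ⟩)` is positive and
`|log ∏_j cos(2π⟨A^j,θ⟩) + 2π² θᵀ(AAᵀ)θ| ≤ c·n·t²·‖θ‖₂⁴`. -/
theorem stmt_8 : ∃ c : ℝ, 0 < c ∧
    ∀ (m n : ℕ), 0 < m → 0 < n → ∀ (t : ℝ), 1 ≤ t →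
    ∀ (A : Matrix (Fin m) (Fin n) ℝ), (∀ i j, A i j = 0 ∨ A i j = 1) →
    (∀ j, Real.sqrt (∑ i, A i j ^ 2) ≤ 2 * Real.sqrt t) →
    ∀ (θ : Fin m → ℝ), Real.sqrt (∑ i, θ i ^ 2) ≤ 1 / (16 * Real.sqrt t) →
      (∀ j, 0 < Real.cos (2 * π * ∑ i, A i j * θ i)) ∧
      |Real.log (∏ j, Real.cos (2 * π * ∑ i, A i j * θ i)) +
          2 * π ^ 2 * (θ ⬝ᵥ (A * Aᵀ) *ᵥ θ)| ≤
        c * n * t ^ 2 * (∑ i, θ i ^ 2) ^ 2 := by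
  refine ⟨128 * π ^ 4, by positivity, ?_⟩
  intro m n _ _ t ht A _ hA θ hθ
  rw [dotProduct_mul_transpose_mulVec]
  have ht0 : 0 < t := by linarith
  set N := ∑ i, θ i ^ 2 with hN
  have hN0 : 0 ≤ N := Finset.sum_nonneg fun i _ => sq_nonneg _
  have hNt : 4 * t * N ≤ (1 / 8) ^ 2 := by
    have h1 := (Real.sqrt_le_left (by positivity)).1 hθ
    rw [div_pow, mul_pow, Real.sq_sqrt ht0.le, le_div_iff₀ (by positivity)] at h1
    linarith
  have hs (j : Fin n) : (∑ i, A i j * θ i) ^ 2 ≤ 4 * t * N := by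
    have h1 := (Real.sqrt_le_left (by positivity)).1 (hA j)
    rw [mul_pow, Real.sq_sqrt ht0.le] at h1
    calc _ ≤ (∑ i, A i j ^ 2) * N := Finset.sum_mul_sq_le_sq_mul_sq _ _ _
      _ ≤ 4 * t * N := by gcongr; linarith
  have hx (j : Fin n) : |2 * π * ∑ i, A i j * θ i| ≤ 1 := by
    have h1 := abs_le_of_sq_le_sq ((hs j).trans hNt) (by norm_num)
    rw [abs_mul, abs_of_pos (by positivity)]
    nlinarith [Real.pi_pos, Real.pi_lt_four]
  refine ⟨fun j => (abs_log_cos_add_le (hx j)).1, ?_⟩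
  rw [Real.log_prod fun j _ => (abs_log_cos_add_le (hx j)).1.ne', Finset.mul_sum,
    ← Finset.sum_add_distrib]
  refine (Finset.abs_sum_le_sum_abs _ _).trans ?_
  have hterm (j : Fin n) : |Real.log (Real.cos (2 * π * ∑ i, A i j * θ i)) +
      2 * π ^ 2 * (∑ i, A i j * θ i) ^ 2| ≤ 128 * π ^ 4 * t ^ 2 * N ^ 2 := by
    have h := (abs_log_cos_add_le (hx j)).2
    have hsj := hs j
    generalize (∑ i, A i j * θ i) = s at h hsj ⊢
    rw [show 2 * π ^ 2 * s ^ 2 = (2 * π * s) ^ 2 / 2 by ring]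
    refine h.trans ?_
    calc (2 * π * s) ^ 4 / 2 = 8 * π ^ 4 * (s ^ 2) ^ 2 := by ring
      _ ≤ 8 * π ^ 4 * (4 * t * N) ^ 2 := by gcongr
      _ = 128 * π ^ 4 * t ^ 2 * N ^ 2 := by ring
  refine (Finset.sum_le_sum fun j _ => hterm j).trans (le_of_eq ?_)
  simp only [Finset.sum_const, Finset.card_univ, Fintype.card_fin, nsmul_eq_mul]
  ring
end

section
/- Let Σ ∈ ℝ^{m×m} be a symmetric positive definite matrix and let λ ≥ 0. Then ∫_{{θ ∈ ℝ^m : θᵀΣθ ≤ (√m + λ)²/(4π²)}} exp(-2π²·θᵀΣθ) dθ ≥ (2π)^{-m/2} · det(Σ)^{-1/2} · (1 - 2·e^{-λ²/2}). -/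
open Real Matrix MeasureTheory

/-!
The bound is Chernoff's inequality for the squared norm of a Gaussian vector. Write
`q θ = θᵀ S θ`, `t = (√m + λ)²` and `R = t / (4π²)`. The integral of `exp (-2π² q)` over the whole
space is `(2π)^(-m/2) det(S)^(-1/2)`. For `0 < c ≤ 1`, on the complement `q > R` of the domain,
`exp (-2π² q) ≤ exp (-2π² (1 - c) R) * exp (-2π² c q)`, and the right side integrates to
`c^(-m/2) exp (-(1 - c) t / 2)` times the full integral. The optimal choice `c = m / t` together
with `log (1 + x) ≤ x` at `x = λ / √m` bounds this factor by `exp (-λ² / 2)`, which is even better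
than the required `2 exp (-λ² / 2)`.
-/

/-- The Gaussian integral of a positive definite quadratic form `S`, by the substitution `x = A θ`
with `S = Aᵀ A`. -/
lemma integral_exp_neg_quadForm {m : ℕ} {S : Matrix (Fin m) (Fin m) ℝ} (hS : S.PosDef)
    {b : ℝ} (hb : 0 < b) :
    ∫ θ : Fin m → ℝ, Real.exp (-b * (θ ⬝ᵥ S *ᵥ θ)) =
      (π / b) ^ ((m : ℝ) / 2) * S.det ^ (-(1 : ℝ) / 2) := by
  obtain ⟨A, hA⟩ : ∃ A : Matrix (Fin m) (Fin m) ℝ, S = Aᵀ * A := by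
    open scoped MatrixOrder in
    obtain ⟨A, hA⟩ := CStarAlgebra.nonneg_iff_eq_star_mul_self.mp hS.posSemidef.nonneg
    exact ⟨A, by simpa [Matrix.star_eq_conjTranspose] using hA⟩
  have hdet : S.det = A.det ^ 2 := by rw [hA, det_mul, det_transpose, sq]
  have hA0 : A.det ≠ 0 := by
    intro h
    have := hS.det_pos
    simp [hdet, h] at this
  have hq : ∀ θ : Fin m → ℝ, θ ⬝ᵥ S *ᵥ θ = ∑ i, (toLin' A θ) i ^ 2 := by
    intro θ
    rw [hA, ← mulVec_mulVec, dotProduct_mulVec, vecMul_transpose, toLin'_apply]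
    simp [dotProduct, sq]
  have hmap := Real.map_matrix_volume_pi_eq_smul_volume_pi hA0
  have hint : ∫ x : Fin m → ℝ, Real.exp (-b * ∑ i, x i ^ 2) = (π / b) ^ ((m : ℝ) / 2) := by
    have h1 : ∀ x : Fin m → ℝ,
        Real.exp (-b * ∑ i, x i ^ 2) = ∏ i, Real.exp (-b * x i ^ 2) := by
      intro x
      rw [Finset.mul_sum, Real.exp_sum]
    simp_rw [h1]
    rw [integral_fintype_prod_volume_eq_pow (fun y : ℝ => Real.exp (-b * y ^ 2)),
      integral_gaussian, Fintype.card_fin, Real.sqrt_eq_rpow, ← Real.rpow_natCast,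
      ← Real.rpow_mul (by positivity)]
    congr 1
    ring
  have hpow : S.det ^ (-(1 : ℝ) / 2) = |A.det⁻¹| := by
    rw [hdet, neg_div, Real.rpow_neg (by positivity), ← Real.sqrt_eq_rpow, Real.sqrt_sq_eq_abs,
      abs_inv]
  simp_rw [hq]
  rw [← integral_map (μ := volume) (φ := toLin' A)
    (f := fun x : Fin m → ℝ => Real.exp (-b * ∑ i, x i ^ 2)), hmap, integral_smul_measure, hint,
    hpow, ENNReal.toReal_ofReal (abs_nonneg _), smul_eq_mul, mul_comm]
  · exact (LinearMap.continuous_on_pi _).measurable.aemeasurable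
  · exact Continuous.aestronglyMeasurable (by fun_prop)

lemma integrable_exp_neg_quadForm {m : ℕ} {S : Matrix (Fin m) (Fin m) ℝ} (hS : S.PosDef)
    {b : ℝ} (hb : 0 < b) :
    Integrable (fun θ : Fin m → ℝ => Real.exp (-b * (θ ⬝ᵥ S *ᵥ θ))) := by
  -- A non-integrable function has integral `0`, but this integral is positive.
  by_contra h
  have h0 := integral_exp_neg_quadForm hS hb
  rw [integral_undef h] at h0
  have := hS.det_pos
  have : 0 < (π / b) ^ ((m : ℝ) / 2) * S.det ^ (-(1 : ℝ) / 2) := by positivity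
  linarith

/-- The optimized Chernoff factor, with `t = (√m + λ)²` and `c = m / t`. -/
lemma chernoff_factor_le {m : ℕ} (hm : 0 < m) {lam : ℝ} (hlam : 0 ≤ lam) :
    ((Real.sqrt m + lam) ^ 2 / m) ^ ((m : ℝ) / 2) *
      Real.exp (-((Real.sqrt m + lam) ^ 2 - m) / 2) ≤ Real.exp (-lam ^ 2 / 2) := by
  set s := Real.sqrt m with hs
  have hm' : (0 : ℝ) < m := by exact_mod_cast hm
  have hs0 : 0 < s := Real.sqrt_pos.mpr hm'
  have hsm : s ^ 2 = m := Real.sq_sqrt hm'.le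
  rw [← hsm, ← div_pow, ← Real.rpow_natCast ((s + lam) / s) 2, ← Real.rpow_mul (by positivity),
    Real.rpow_def_of_pos (by positivity), ← Real.exp_add]
  apply Real.exp_le_exp.mpr
  have hlog : Real.log ((s + lam) / s) ≤ lam / s := by
    have := Real.log_le_sub_one_of_pos (show 0 < (s + lam) / s by positivity)
    have e : (s + lam) / s - 1 = lam / s := by field_simp; ring
    linarith
  have h2 : Real.log ((s + lam) / s) * s ^ 2 ≤ s * lam := by
    calc _ ≤ lam / s * s ^ 2 := by gcongr
      _ = s * lam := by field_simp
  push_cast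
  nlinarith

/-- For a symmetric positive definite `Σ ∈ ℝ^{m×m}` and `λ ≥ 0`:
`∫_{θᵀΣθ ≤ (√m+λ)²/(4π²)} exp(-2π²θᵀΣθ) dθ ≥ (2π)^{-m/2} det(Σ)^{-1/2} (1-2e^{-λ²/2})`. -/
theorem stmt_9 (m : ℕ) (hm : 0 < m) (S : Matrix (Fin m) (Fin m) ℝ) (hS : S.PosDef)
    (lam : ℝ) (hlam : 0 ≤ lam) :
    (∫ θ in {θ : Fin m → ℝ |
        θ ⬝ᵥ S *ᵥ θ ≤ (Real.sqrt m + lam) ^ 2 / (4 * π ^ 2)},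
        Real.exp (-(2 * π ^ 2) * (θ ⬝ᵥ S *ᵥ θ))) ≥
      (2 * π) ^ (-(m : ℝ) / 2) * S.det ^ (-(1 : ℝ) / 2) *
        (1 - 2 * Real.exp (-lam ^ 2 / 2)) := by
  have hm' : (0 : ℝ) < m := by exact_mod_cast hm
  have hdet := hS.det_pos
  have hs0 : 0 < Real.sqrt m := Real.sqrt_pos.mpr hm'
  have hsm : Real.sqrt m ^ 2 = m := Real.sq_sqrt hm'.le
  have hfac := chernoff_factor_le hm hlam
  set t := (Real.sqrt m + lam) ^ 2 with ht
  have ht0 : 0 < t := by positivity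
  have hmt : (m : ℝ) ≤ t := by nlinarith
  have hc0 : 0 < (m : ℝ) / t := by positivity
  have hc1 : (m : ℝ) / t ≤ 1 := (div_le_one ht0).mpr hmt
  have hb : 0 < 2 * π ^ 2 := by positivity
  have hbc : 0 < 2 * π ^ 2 * (m / t) := by positivity
  have hI := integrable_exp_neg_quadForm hS hb
  have hIc := integrable_exp_neg_quadForm hS hbc
  have hmeas : MeasurableSet {θ : Fin m → ℝ | θ ⬝ᵥ S *ᵥ θ ≤ t / (4 * π ^ 2)} := by
    apply IsClosed.measurableSet
    apply isClosed_le _ continuous_const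
    fun_prop
  have hsplit := integral_add_compl hmeas hI
  have htail : ∫ θ in {θ : Fin m → ℝ | θ ⬝ᵥ S *ᵥ θ ≤ t / (4 * π ^ 2)}ᶜ,
      Real.exp (-(2 * π ^ 2) * (θ ⬝ᵥ S *ᵥ θ)) ≤
      ∫ θ : Fin m → ℝ, Real.exp (-(t - m) / 2) *
        Real.exp (-(2 * π ^ 2 * (m / t)) * (θ ⬝ᵥ S *ᵥ θ)) := by
    refine le_trans (setIntegral_mono_on hI.integrableOn
      (hIc.const_mul (Real.exp (-(t - m) / 2))).integrableOn hmeas.compl ?_)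
      (setIntegral_le_integral (hIc.const_mul _) (ae_of_all _ fun θ => by positivity))
    intro θ hθ
    have hθ' : t / (4 * π ^ 2) < θ ⬝ᵥ S *ᵥ θ := by simpa using hθ
    rw [← Real.exp_add]
    apply Real.exp_le_exp.mpr
    have h1 : 2 * π ^ 2 * (1 - m / t) * (t / (4 * π ^ 2)) ≤
        2 * π ^ 2 * (1 - m / t) * (θ ⬝ᵥ S *ᵥ θ) :=
      mul_le_mul_of_nonneg_left hθ'.le (mul_nonneg hb.le (by linarith))
    have h2 : 2 * π ^ 2 * (1 - m / t) * (t / (4 * π ^ 2)) = (t - m) / 2 := by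
      field_simp
      ring
    linarith
  rw [integral_const_mul, integral_exp_neg_quadForm hS hbc] at htail
  rw [integral_exp_neg_quadForm hS hb] at hsplit
  have e1 : (π / (2 * π ^ 2)) ^ ((m : ℝ) / 2) = (2 * π) ^ (-(m : ℝ) / 2) := by
    rw [neg_div, Real.rpow_neg (by positivity), ← Real.inv_rpow (by positivity)]
    congr 1
    field_simp
  have e2 : (π / (2 * π ^ 2 * (m / t))) ^ ((m : ℝ) / 2) =
      (2 * π) ^ (-(m : ℝ) / 2) * (t / m) ^ ((m : ℝ) / 2) := by
    rw [← e1, ← Real.mul_rpow (by positivity) (by positivity)]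
    congr 1
    field_simp
  rw [e2] at htail
  rw [e1] at hsplit
  have hK : 0 ≤ (2 * π) ^ (-(m : ℝ) / 2) * S.det ^ (-(1 : ℝ) / 2) := by positivity
  have h3 := mul_le_mul_of_nonneg_left hfac hK
  have h4 := mul_nonneg hK (Real.exp_pos (-lam ^ 2 / 2)).le
  linarith
end

section
/- There exists a constant c > 0 with the following property. For every positive integer m and every θ ∈ ℝ^m with ‖θ‖₂ ≤ c, one has ĝ_1(θ) > 2·Σ_{s ∈ {-1/2,0,1/2}^m \ {0}} |ĝ_1(θ + s)|. -/
open Real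

/-!
Write `b i = sin² (π θ i)`. A shift by `0` gives the factor `1 - b i`, and a shift by `±1/2` gives
the factor `b i`. All factors are nonnegative, so the sum over all `s`, including `s = 0`, factors as
`∏ (1 - b i + 2 b i) = ∏ (1 + b i)`, and the claim becomes `2 ∏ (1 + b i) < 3 ∏ (1 - b i)`.
Since `∑ b i ≤ π² ‖θ‖²` is small, `∏ (1 - b i) ≥ 1 - ∑ b i` is close to `1`, and
`∏ (1 + b i) * ∏ (1 - b i) ≤ 1` bounds the other product.
-/

lemma factor_eq (x : ℝ) : 1 / 2 + 1 / 2 * cos (2 * π * x) = 1 - sin (π * x) ^ 2 := by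
  rw [mul_assoc, cos_two_mul, cos_sq']
  ring

lemma factor_add_half (x : ℝ) :
    1 / 2 + 1 / 2 * cos (2 * π * (x + 1 / 2)) = sin (π * x) ^ 2 := by
  rw [show 2 * π * (x + 1 / 2) = 2 * (π * x) + π by ring, cos_add_pi, cos_two_mul, cos_sq']
  ring

lemma factor_sub_half (x : ℝ) :
    1 / 2 + 1 / 2 * cos (2 * π * (x + -(1 / 2))) = sin (π * x) ^ 2 := by
  rw [show 2 * π * (x + -(1 / 2)) = 2 * (π * x) - π by ring, cos_sub_pi, cos_two_mul, cos_sq']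
  ring

lemma factor_nonneg (x : ℝ) : 0 ≤ 1 / 2 + 1 / 2 * cos (2 * π * x) := by
  linarith [neg_one_le_cos (2 * π * x)]

lemma sum_factor (x : ℝ) :
    ∑ t ∈ ({-(1 / 2), 0, 1 / 2} : Finset ℝ), (1 / 2 + 1 / 2 * cos (2 * π * (x + t))) =
      1 + sin (π * x) ^ 2 := by
  rw [Finset.sum_insert (by norm_num), Finset.sum_insert (by norm_num), Finset.sum_singleton,
    factor_sub_half, factor_add_half, add_zero, factor_eq]
  ring

lemma one_sub_sum_le_prod {ι : Type*} (s : Finset ι) (b : ι → ℝ)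
    (h0 : ∀ i, 0 ≤ b i) (h1 : ∀ i, b i ≤ 1) :
    1 - ∑ i ∈ s, b i ≤ ∏ i ∈ s, (1 - b i) := by
  classical
  induction s using Finset.induction_on with
  | empty => simp
  | insert a s ha ih =>
    rw [Finset.sum_insert ha, Finset.prod_insert ha]
    have hle : ∏ i ∈ s, (1 - b i) ≤ 1 :=
      Finset.prod_le_one (fun i _ => by linarith [h1 i]) (fun i _ => by linarith [h0 i])
    nlinarith [h0 a]

/-- There is `c > 0` such that for `‖θ‖₂ ≤ c`,
`ĝ₁(θ) > 2 ∑_{s ∈ {-1/2,0,1/2}^m \ {0}} |ĝ₁(θ+s)|`. -/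
theorem stmt_12 : ∃ c : ℝ, 0 < c ∧
    ∀ (m : ℕ), 0 < m → ∀ (θ : Fin m → ℝ), Real.sqrt (∑ i, θ i ^ 2) ≤ c →
      ∏ i, (1 / 2 + 1 / 2 * Real.cos (2 * π * θ i)) >
        2 * ∑ s ∈ (Fintype.piFinset fun _ : Fin m =>
              ({-(1 / 2), 0, 1 / 2} : Finset ℝ)).erase 0,
            |∏ i, (1 / 2 + 1 / 2 * Real.cos (2 * π * (θ i + s i)))| := by
  -- With `c = 1/16` one gets `∑ b i ≤ π² / 256 < 1/16`, and `2 / (15/16) < 3 * (15/16)`.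
  refine ⟨1 / 16, by norm_num, fun m _ θ hθ => ?_⟩
  have habs : ∀ s : Fin m → ℝ, |∏ i, (1 / 2 + 1 / 2 * cos (2 * π * (θ i + s i)))| =
      ∏ i, (1 / 2 + 1 / 2 * cos (2 * π * (θ i + s i))) := fun s =>
    abs_of_nonneg (Finset.prod_nonneg fun i _ => factor_nonneg _)
  simp only [habs]
  have hmem : (0 : Fin m → ℝ) ∈ Fintype.piFinset fun _ : Fin m =>
      ({-(1 / 2), 0, 1 / 2} : Finset ℝ) := by
    simp [Fintype.mem_piFinset]
  have htotal := Finset.prod_univ_sum (fun _ : Fin m => ({-(1 / 2), 0, 1 / 2} : Finset ℝ))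
    (fun i t => 1 / 2 + 1 / 2 * cos (2 * π * (θ i + t)))
  have hsplit := Finset.add_sum_erase _
    (fun s : Fin m → ℝ => ∏ i, (1 / 2 + 1 / 2 * cos (2 * π * (θ i + s i)))) hmem
  rw [← htotal] at hsplit
  simp only [sum_factor, Pi.zero_apply, add_zero] at hsplit
  simp only [factor_eq] at hsplit ⊢
  have hb0 : ∀ i, 0 ≤ sin (π * θ i) ^ 2 := fun i => sq_nonneg _
  have hb1 : ∀ i, sin (π * θ i) ^ 2 ≤ 1 := fun i => sin_sq_le_one _
  have hsum : ∑ i, sin (π * θ i) ^ 2 ≤ 1 / 16 := by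
    have hθ2 : ∑ i, θ i ^ 2 ≤ (1 / 16) ^ 2 := (Real.sqrt_le_left (by norm_num)).1 hθ
    calc ∑ i, sin (π * θ i) ^ 2 ≤ ∑ i, π ^ 2 * θ i ^ 2 := Finset.sum_le_sum fun i _ => by
          rw [← mul_pow]
          exact sq_le_sq.2 abs_sin_le_abs
      _ = π ^ 2 * ∑ i, θ i ^ 2 := by rw [Finset.mul_sum]
      _ ≤ 4 ^ 2 * (1 / 16) ^ 2 := by
          gcongr
          · exact pi_le_four
      _ = 1 / 16 := by norm_num
  have hP := one_sub_sum_le_prod Finset.univ _ hb0 hb1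
  have hPQ : (∏ i, (1 + sin (π * θ i) ^ 2)) * ∏ i, (1 - sin (π * θ i) ^ 2) ≤ 1 := by
    rw [← Finset.prod_mul_distrib]
    refine Finset.prod_le_one (fun i _ => ?_) (fun i _ => ?_)
    · exact mul_nonneg (by linarith [hb0 i]) (by linarith [hb1 i])
    · nlinarith [hb0 i]
  have hQ : 0 ≤ ∏ i, (1 + sin (π * θ i) ^ 2) :=
    Finset.prod_nonneg fun i _ => by linarith [hb0 i]
  have hQle : (∏ i, (1 + sin (π * θ i) ^ 2)) * (15 / 16) ≤ 1 :=
    (mul_le_mul_of_nonneg_left (by linarith) hQ).trans hPQ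
  linarith
end

section
/- There exists a constant c > 0 with the following property. For all positive integers m, n, every matrix A ∈ {0,1}^{m×n}, and every θ ∈ ℝ^m with ‖θ‖₂ ≤ c, one has |D̂_A(θ)·ĝ_1(θ)| ≥ 2·Σ_{s ∈ {-1/2,0,1/2}^m \ {0}} |D̂_A(θ+s)·ĝ_1(θ+s)|. -/
open Real

/-!
Each shift `s ∈ {-1/2, 0, 1/2}^m` changes the argument of every cosine in `D̂_A` by an integer
multiple of `π`, so `|D̂_A(θ + s)| = |D̂_A(θ)|` (`abs_cos_shift`) and this factor can be pulled out.
Writing `x i = sin² (π θ i)`, the factor of `ĝ₁` at coordinate `i` is `1 - x i` when `s i = 0` and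
`x i` when `s i = ±1/2`. Hence the sum of `ĝ₁(θ + s)` over all `s`, including `s = 0`, factors as
`∏ (1 + x i)`, and the claim becomes `2 ∏ (1 + x i) ≤ 3 ∏ (1 - x i)`. This holds once
`∑ x i ≤ 1/10` (`two_prod_le_three_prod`), which follows from `∑ x i ≤ π² ‖θ‖₂²` and `‖θ‖₂ ≤ 1/12`.
-/

/-- The shift of the argument is `π` times the integer `∑ i, a i * (2 * s i)`. -/
lemma abs_cos_shift {m : ℕ} (a θ s : Fin m → ℝ) (ha : ∀ i, a i = 0 ∨ a i = 1)
    (hs : ∀ i, s i = -(1 / 2) ∨ s i = 0 ∨ s i = 1 / 2) :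
    |Real.cos (2 * π * ∑ i, a i * (θ i + s i))| = |Real.cos (2 * π * ∑ i, a i * θ i)| := by
  have h : ∀ i, ∃ k : ℤ, 2 * (a i * s i) = k := by
    intro i
    rcases ha i with h | h <;> rcases hs i with h' | h' | h' <;> rw [h, h']
    · exact ⟨0, by norm_num⟩
    · exact ⟨0, by norm_num⟩
    · exact ⟨0, by norm_num⟩
    · exact ⟨-1, by norm_num⟩
    · exact ⟨0, by norm_num⟩
    · exact ⟨1, by norm_num⟩
  choose k hk using h
  have e : 2 * π * ∑ i, a i * (θ i + s i)
      = 2 * π * ∑ i, a i * θ i + ((∑ i, k i : ℤ) : ℝ) * π := by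
    push_cast
    simp only [← hk, mul_add, Finset.sum_add_distrib, ← Finset.mul_sum]
    ring
  rw [e, Real.cos_add_int_mul_pi, abs_mul, abs_zpow]
  simp

/-- Combines `1 - X ≤ ∏ (1 - x i)` and `∏ (1 + x i) ≤ exp X ≤ 1 / (1 - X)` with `X = ∑ x i`. -/
lemma two_prod_le_three_prod {m : ℕ} (x : Fin m → ℝ) (h0 : ∀ i, 0 ≤ x i) (h1 : ∀ i, x i ≤ 1)
    (hX : ∑ i, x i ≤ 1 / 10) : 2 * ∏ i, (1 + x i) ≤ 3 * ∏ i, (1 - x i) := by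
  have hlow : 1 - ∑ i, x i ≤ ∏ i, (1 - x i) := by
    -- The induction also carries `∏ (1 - x i) ≤ 1`, which its step needs.
    suffices h : ∀ T : Finset (Fin m), 1 - ∑ i ∈ T, x i ≤ ∏ i ∈ T, (1 - x i) ∧
        ∏ i ∈ T, (1 - x i) ≤ 1 from (h Finset.univ).1
    intro T
    induction T using Finset.induction_on with
    | empty => simp
    | insert a T ha ih =>
      rw [Finset.sum_insert ha, Finset.prod_insert ha]
      have hP : 0 ≤ ∏ i ∈ T, (1 - x i) := Finset.prod_nonneg fun i _ => by linarith [h1 i]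
      constructor <;> nlinarith [h0 a, h1 a, ih.1, ih.2]
  have hup : ∏ i, (1 + x i) ≤ Real.exp (∑ i, x i) := by
    rw [Real.exp_sum]
    refine Finset.prod_le_prod (fun i _ => by linarith [h0 i]) (fun i _ => ?_)
    linarith [Real.add_one_le_exp (x i)]
  have hexp : Real.exp (∑ i, x i) * (1 - ∑ i, x i) ≤ 1 := by
    have h := Real.add_one_le_exp (-∑ i, x i)
    calc _ ≤ Real.exp (∑ i, x i) * Real.exp (-∑ i, x i) := by
          gcongr
          linarith
      _ = 1 := by rw [← Real.exp_add]; simp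
  nlinarith [Real.exp_pos (∑ i, x i)]

lemma half_add_half_cos (t : ℝ) :
    1 / 2 + 1 / 2 * Real.cos (2 * π * t) = 1 - Real.sin (π * t) ^ 2 := by
  rw [mul_assoc, Real.cos_two_mul, Real.cos_sq']
  ring

/-- At one coordinate, the shift `0` contributes `cos²` and the shifts `±1/2` contribute `sin²`
each. -/
lemma sum_shifts (t : ℝ) :
    ∑ u ∈ ({-(1 / 2), 0, 1 / 2} : Finset ℝ), (1 / 2 + 1 / 2 * Real.cos (2 * π * (t + u)))
      = 1 + Real.sin (π * t) ^ 2 := by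
  have h1 : Real.cos (2 * π * (t + -(1 / 2))) = -Real.cos (2 * π * t) := by
    rw [← Real.cos_sub_pi]; congr 1; ring
  have h2 : Real.cos (2 * π * (t + 1 / 2)) = -Real.cos (2 * π * t) := by
    rw [← Real.cos_add_pi]; congr 1; ring
  rw [Finset.sum_insert (by norm_num), Finset.sum_insert (by norm_num), Finset.sum_singleton,
    h1, h2, add_zero]
  linarith [half_add_half_cos t]

/-- There is `c > 0` such that for every `A ∈ {0,1}^{m×n}` and `‖θ‖₂ ≤ c`,
`|D̂_A(θ)·ĝ₁(θ)| ≥ 2 ∑_{s ∈ {-1/2,0,1/2}^m \ {0}} |D̂_A(θ+s)·ĝ₁(θ+s)|`,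
where `D̂_A(θ) = ∏_j cos(2π⟨A^j,θ⟩)` and `ĝ₁(θ) = ∏_i (1/2 + cos(2πθᵢ)/2)`. -/
theorem stmt_13 : ∃ c : ℝ, 0 < c ∧
    ∀ (m n : ℕ), 0 < m → 0 < n →
    ∀ (A : Matrix (Fin m) (Fin n) ℝ), (∀ i j, A i j = 0 ∨ A i j = 1) →
    ∀ (θ : Fin m → ℝ), Real.sqrt (∑ i, θ i ^ 2) ≤ c →
      |(∏ j, Real.cos (2 * π * ∑ i, A i j * θ i)) *
          ∏ i, (1 / 2 + 1 / 2 * Real.cos (2 * π * θ i))| ≥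
        2 * ∑ s ∈ (Fintype.piFinset fun _ : Fin m =>
              ({-(1 / 2), 0, 1 / 2} : Finset ℝ)).erase 0,
            |(∏ j, Real.cos (2 * π * ∑ i, A i j * (θ i + s i))) *
              ∏ i, (1 / 2 + 1 / 2 * Real.cos (2 * π * (θ i + s i)))| := by
  refine ⟨1 / 12, by norm_num, ?_⟩
  intro m n _ _ A hA θ hθ
  set S := Fintype.piFinset fun _ : Fin m => ({-(1 / 2), 0, 1 / 2} : Finset ℝ) with hS
  have hg0 : ∀ t : ℝ, 0 ≤ 1 / 2 + 1 / 2 * Real.cos (2 * π * t) := fun t => by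
    linarith [Real.neg_one_le_cos (2 * π * t)]
  have hG0 : ∀ f : Fin m → ℝ, 0 ≤ ∏ i, (1 / 2 + 1 / 2 * Real.cos (2 * π * f i)) :=
    fun f => Finset.prod_nonneg fun i _ => hg0 _
  set d := |∏ j, Real.cos (2 * π * ∑ i, A i j * θ i)| with hd
  have hterm : ∀ s ∈ S, |(∏ j, Real.cos (2 * π * ∑ i, A i j * (θ i + s i))) *
      ∏ i, (1 / 2 + 1 / 2 * Real.cos (2 * π * (θ i + s i)))|
      = d * ∏ i, (1 / 2 + 1 / 2 * Real.cos (2 * π * (θ i + s i))) := by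
    intro s hs
    have hs' : ∀ i, s i = -(1 / 2) ∨ s i = 0 ∨ s i = 1 / 2 := by
      intro i
      simpa using Fintype.mem_piFinset.1 hs i
    rw [abs_mul, abs_of_nonneg (hG0 fun i => θ i + s i), hd, Finset.abs_prod, Finset.abs_prod]
    congr 1
    exact Finset.prod_congr rfl fun j _ => abs_cos_shift (fun i => A i j) θ s (fun i => hA i j) hs'
  have h0S : (0 : Fin m → ℝ) ∈ S := Fintype.mem_piFinset.2 fun i => by simp
  have htot : ∑ s ∈ S, ∏ i, (1 / 2 + 1 / 2 * Real.cos (2 * π * (θ i + s i)))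
      = ∏ i, (1 + Real.sin (π * θ i) ^ 2) := by
    rw [hS, ← Finset.prod_univ_sum (fun _ : Fin m => ({-(1 / 2), 0, 1 / 2} : Finset ℝ))
      (fun i u => 1 / 2 + 1 / 2 * Real.cos (2 * π * (θ i + u)))]
    exact Finset.prod_congr rfl fun i _ => sum_shifts (θ i)
  rw [← Finset.add_sum_erase S _ h0S] at htot
  rw [Finset.sum_congr rfl fun s hs => hterm s (Finset.mem_of_mem_erase hs), ← Finset.mul_sum,
    abs_mul, abs_of_nonneg (hG0 θ), ← hd]
  simp only [Pi.zero_apply, add_zero, half_add_half_cos (θ _)] at htot ⊢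
  have hsum : ∑ i, Real.sin (π * θ i) ^ 2 ≤ 1 / 10 := by
    have hsq : ∑ i, θ i ^ 2 ≤ (1 / 12) ^ 2 := (Real.sqrt_le_left (by norm_num)).1 hθ
    calc ∑ i, Real.sin (π * θ i) ^ 2 ≤ ∑ i, π ^ 2 * θ i ^ 2 := by
          refine Finset.sum_le_sum fun i _ => ?_
          rw [← mul_pow]
          exact sq_le_sq.2 Real.abs_sin_le_abs
      _ = π ^ 2 * ∑ i, θ i ^ 2 := by rw [Finset.mul_sum]
      _ ≤ 3.15 ^ 2 * (1 / 12) ^ 2 := by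
          gcongr
          exact Real.pi_lt_d2.le
      _ ≤ 1 / 10 := by norm_num
  have hmain := two_prod_le_three_prod (fun i => Real.sin (π * θ i) ^ 2)
    (fun i => sq_nonneg _) (fun i => Real.sin_sq_le_one _) hsum
  rw [ge_iff_le, mul_left_comm]
  refine mul_le_mul_of_nonneg_left ?_ (abs_nonneg _)
  linarith
end

section
/- There exist constants c > 0 and C > 0 with the following property. Let m, n be positive integers with m ≥ C, let p ∈ (0, 1/2], and set t := p·m. Let A ∈ {0,1}^{m×n} be a random matrix with independent entries satisfying Pr[A_{ij} = 1] = p. Then with probability at least 1 - exp(-c·n/m) (over A), ∫_{{θ ∈ [-1/2,1/2)^m : d₂(θ,Λ) ≥ 1/(16√t)}} |∏_{j=1}^n cos(2π·⟨A^j,θ⟩)| dθ ≤ exp(-c·n/m). -/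
/-!
The bound holds pointwise in `θ` after averaging over `A`. Since the columns of `A` are
independent, `E |∏ j cos (2π⟨A^j, θ⟩)| = (E |cos (2π⟨b, θ⟩)|) ^ n` for a single Bernoulli column `b`.
From `|cos x| ≤ 3/4 + cos (2x) / 4` and
`|E exp (4πi⟨b, θ⟩)| = ∏ i |1 - p + p exp (4πi θ i)| ≤ exp (-16 p ‖θ - s‖²)`, where `s` is the
half-integral point nearest to `θ`, the hypothesis `‖θ - s‖² ≥ 1 / (256 p m)` gives
`E |cos (2π⟨b, θ⟩)| ≤ exp (-1 / (128 m))` (`column_average_le`). Integrating over a subset of the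
unit cube, the expected integral is at most `exp (-n / (128 m))`, and Markov's inequality gives the
theorem with `c = 1/256` and `C = 1`.
-/

open Real MeasureTheory
open scoped Classical

/-- The probability that a vector of independent Bernoulli(`p`) bits equals `b`. -/
noncomputable def colWeight {m : ℕ} (p : ℝ) (b : Fin m → Bool) : ℝ :=
  ∏ i, (if b i then p else 1 - p)

lemma colWeight_nonneg {m : ℕ} {p : ℝ} (h0 : 0 < p) (h1 : p ≤ 1 / 2) (b : Fin m → Bool) :
    0 ≤ colWeight p b := by
  unfold colWeight
  apply Finset.prod_nonneg
  intro i _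
  split_ifs <;> linarith

lemma sum_colWeight (m : ℕ) (p : ℝ) : ∑ b : Fin m → Bool, colWeight p b = 1 := by
  unfold colWeight
  rw [← Fintype.prod_sum (fun (_ : Fin m) (b : Bool) => if b then p else 1 - p)]
  simp

lemma abs_cos_le_cos_two_mul (x : ℝ) : |Real.cos x| ≤ 3 / 4 + Real.cos (2 * x) / 4 := by
  rw [Real.cos_two_mul, ← sq_abs]
  nlinarith [sq_nonneg (|Real.cos x| - 1)]

/-- The characteristic function of a Bernoulli vector factors over its coordinates. -/
lemma sum_colWeight_mul_exp {m : ℕ} (p : ℝ) (θ : Fin m → ℝ) :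
    ∑ b : Fin m → Bool, (colWeight p b : ℂ) *
        Complex.exp (((2 * (2 * π * ∑ i, if b i then θ i else 0) : ℝ) : ℂ) * Complex.I) =
      ∏ i, ((p : ℂ) * Complex.exp (((4 * π * θ i : ℝ) : ℂ) * Complex.I) + (1 - p)) := by
  have key : ∀ i, ((p : ℂ) * Complex.exp (((4 * π * θ i : ℝ) : ℂ) * Complex.I) + (1 - p)) =
      ∑ b : Bool, (if b then (p : ℂ) * Complex.exp (((4 * π * θ i : ℝ) : ℂ) * Complex.I)
        else (1 - p)) := by
    intro i; simp
  simp_rw [key]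
  rw [Fintype.prod_sum]
  refine Finset.sum_congr rfl fun b _ => ?_
  have h : ((2 * (2 * π * ∑ i, if b i then θ i else 0) : ℝ) : ℂ) * Complex.I =
      ∑ i, ((if b i then 4 * π * θ i else 0 : ℝ) : ℂ) * Complex.I := by
    rw [← Finset.sum_mul, ← Complex.ofReal_sum]
    congr 2
    rw [Finset.mul_sum, Finset.mul_sum]
    refine Finset.sum_congr rfl fun i _ => ?_
    split_ifs <;> ring
  rw [h, Complex.exp_sum, colWeight, Complex.ofReal_prod, ← Finset.prod_mul_distrib]
  refine Finset.prod_congr rfl fun i _ => ?_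
  split_ifs <;> simp

lemma sixteen_mul_sq_le_sin_sq {x : ℝ} (hx : |x| ≤ 1 / 4) :
    16 * x ^ 2 ≤ Real.sin (2 * π * x) ^ 2 := by
  have hpi := Real.pi_pos
  have h := Real.mul_le_sin (x := 2 * π * |x|) (by positivity) (by nlinarith)
  have h' : 2 / π * (2 * π * |x|) = 4 * |x| := by field_simp; ring
  rw [h'] at h
  have h2 : (4 * |x|) ^ 2 ≤ Real.sin (2 * π * |x|) ^ 2 :=
    pow_le_pow_left₀ (by positivity) h 2
  have h3 : Real.sin (2 * π * |x|) ^ 2 = Real.sin (2 * π * x) ^ 2 := by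
    rcases abs_choice x with e | e <;> rw [e]
    rw [mul_neg, Real.sin_neg, neg_sq]
  rw [h3, mul_pow, sq_abs] at h2
  linarith

lemma exists_near_half_integer {x : ℝ} (hx : x ∈ Set.Ico (-(1 / 2) : ℝ) (1 / 2)) :
    ∃ s ∈ ({-(1 / 2), 0, 1 / 2} : Finset ℝ), 16 * (x - s) ^ 2 ≤ Real.sin (2 * π * x) ^ 2 := by
  obtain ⟨h1, h2⟩ := hx
  rcases le_total x (-(1 / 4)) with h | h
  · refine ⟨-(1 / 2), by simp, ?_⟩
    have := sixteen_mul_sq_le_sin_sq (x := x - -(1 / 2)) (by rw [abs_le]; constructor <;> linarith)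
    rwa [show 2 * π * (x - -(1 / 2)) = 2 * π * x + π by ring, Real.sin_add_pi, neg_sq] at this
  rcases le_total x (1 / 4) with h' | h'
  · refine ⟨0, by simp, ?_⟩
    have := sixteen_mul_sq_le_sin_sq (x := x) (by rw [abs_le]; constructor <;> linarith)
    simpa using this
  · refine ⟨1 / 2, by simp, ?_⟩
    have := sixteen_mul_sq_le_sin_sq (x := x - 1 / 2) (by rw [abs_le]; constructor <;> linarith)
    rwa [show 2 * π * (x - 1 / 2) = 2 * π * x - π by ring, Real.sin_sub_pi, neg_sq] at this

lemma norm_factor_le {p x d : ℝ} (h0 : 0 < p) (h1 : p ≤ 1 / 2)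
    (hd : 16 * d ^ 2 ≤ Real.sin (2 * π * x) ^ 2) :
    ‖(p : ℂ) * Complex.exp (((4 * π * x : ℝ) : ℂ) * Complex.I) + (1 - p)‖ ≤
      Real.exp (-(16 * p * d ^ 2)) := by
  refine le_of_sq_le_sq ?_ (Real.exp_pos _).le
  have hsq : ‖(p : ℂ) * Complex.exp (((4 * π * x : ℝ) : ℂ) * Complex.I) + (1 - p)‖ ^ 2 =
      1 - 4 * p * (1 - p) * Real.sin (2 * π * x) ^ 2 := by
    have e1 : ((p : ℂ) * Complex.exp (((4 * π * x : ℝ) : ℂ) * Complex.I) + (1 - p)).re =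
        p * Real.cos (4 * π * x) + (1 - p) := by
      rw [Complex.add_re, Complex.re_ofReal_mul, Complex.exp_ofReal_mul_I_re]; simp
    have e2 : ((p : ℂ) * Complex.exp (((4 * π * x : ℝ) : ℂ) * Complex.I) + (1 - p)).im =
        p * Real.sin (4 * π * x) := by
      rw [Complex.add_im, Complex.im_ofReal_mul, Complex.exp_ofReal_mul_I_im]; simp
    rw [Complex.sq_norm, Complex.normSq_apply, e1, e2]
    have h4 := Real.cos_two_mul (2 * π * x)
    rw [show 2 * (2 * π * x) = 4 * π * x by ring, Real.cos_sq'] at h4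
    linear_combination p ^ 2 * Real.sin_sq_add_cos_sq (4 * π * x) + 2 * p * (1 - p) * h4
  rw [hsq, ← Real.exp_nat_mul]
  have hexp := Real.add_one_le_exp (((2 : ℕ) : ℝ) * (-(16 * p * d ^ 2)))
  refine le_trans ?_ hexp
  push_cast
  have h5 : 2 * p * (16 * d ^ 2) ≤ 4 * p * (1 - p) * Real.sin (2 * π * x) ^ 2 :=
    mul_le_mul (by nlinarith) hd (by positivity) (by nlinarith)
  linarith

/-- For `θ` in the cube and far from all half-integral points, a single random column already gains
a factor `exp (-1 / (128 m))`. -/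
lemma column_average_le {m : ℕ} (hm : 0 < m) {p : ℝ} (h0 : 0 < p) (h1 : p ≤ 1 / 2)
    (θ : Fin m → ℝ) (hθ : ∀ i, θ i ∈ Set.Ico (-(1 / 2) : ℝ) (1 / 2))
    (hfar : ∀ s ∈ Fintype.piFinset fun _ : Fin m => ({-(1 / 2), 0, 1 / 2} : Finset ℝ),
      1 / (16 * Real.sqrt (p * m)) ≤ Real.sqrt (∑ i, (θ i - s i) ^ 2)) :
    ∑ b : Fin m → Bool, colWeight p b * |Real.cos (2 * π * ∑ i, if b i then θ i else 0)| ≤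
      Real.exp (-(1 / (128 * (m : ℝ)))) := by
  have hm' : (1 : ℝ) ≤ m := by exact_mod_cast hm
  choose s hs hsin using fun i => exists_near_half_integer (hθ i)
  have hdist := hfar s (by simpa [Fintype.mem_piFinset] using hs)
  have hdist2 : 1 / (256 * (p * m)) ≤ ∑ i, (θ i - s i) ^ 2 := by
    have h := pow_le_pow_left₀ (by positivity) hdist 2
    rw [Real.sq_sqrt (Finset.sum_nonneg fun i _ => sq_nonneg _), div_pow, mul_pow,
      Real.sq_sqrt (by positivity)] at h
    norm_num at h ⊢
    exact h
  have hchar : ∑ b : Fin m → Bool, colWeight p b *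
      Real.cos (2 * (2 * π * ∑ i, if b i then θ i else 0)) ≤ Real.exp (-(1 / (16 * (m : ℝ)))) := by
    have hre : ∑ b : Fin m → Bool, colWeight p b *
        Real.cos (2 * (2 * π * ∑ i, if b i then θ i else 0)) =
        (∑ b : Fin m → Bool, (colWeight p b : ℂ) * Complex.exp
          (((2 * (2 * π * ∑ i, if b i then θ i else 0) : ℝ) : ℂ) * Complex.I)).re := by
      rw [Complex.re_sum]
      refine Finset.sum_congr rfl fun b _ => ?_
      rw [Complex.re_ofReal_mul, Complex.exp_ofReal_mul_I_re]
    rw [hre, sum_colWeight_mul_exp]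
    refine (Complex.re_le_norm _).trans ?_
    rw [norm_prod]
    refine (Finset.prod_le_prod (fun i _ => norm_nonneg _)
      (fun i _ => norm_factor_le h0 h1 (hsin i))).trans ?_
    rw [← Real.exp_sum, Real.exp_le_exp, Finset.sum_neg_distrib, ← Finset.mul_sum, neg_le_neg_iff]
    calc 1 / (16 * (m : ℝ)) = 16 * p * (1 / (256 * (p * m))) := by field_simp; norm_num
      _ ≤ _ := by gcongr
  have hlin : Real.exp (-(1 / (16 * (m : ℝ)))) ≤ 1 - 1 / (32 * (m : ℝ)) := by
    have hy : 1 / (16 * (m : ℝ)) ≤ 1 := by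
      rw [div_le_one (by positivity)]; linarith
    have hy0 : 0 < 1 / (16 * (m : ℝ)) := by positivity
    have e : 1 / (32 * (m : ℝ)) = 1 / (16 * (m : ℝ)) / 2 := by field_simp; norm_num
    rw [e]
    generalize 1 / (16 * (m : ℝ)) = y at *
    have h := Real.add_one_le_exp y
    have hmul : Real.exp (-y) * Real.exp y = 1 := by rw [← Real.exp_add]; simp
    have hpos := Real.exp_pos (-y)
    -- `exp (-y) ≤ 1 / (1 + y) ≤ 1 - y / 2` for `0 ≤ y ≤ 1`
    have h6 : Real.exp (-y) * (1 + y) ≤ 1 := by nlinarith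
    by_contra! hcon
    nlinarith
  calc _ ≤ ∑ b : Fin m → Bool, colWeight p b *
        (3 / 4 + Real.cos (2 * (2 * π * ∑ i, if b i then θ i else 0)) / 4) :=
        Finset.sum_le_sum fun b _ =>
          mul_le_mul_of_nonneg_left (abs_cos_le_cos_two_mul _) (colWeight_nonneg h0 h1 b)
    _ = 3 / 4 * ∑ b : Fin m → Bool, colWeight p b + (∑ b : Fin m → Bool, colWeight p b *
        Real.cos (2 * (2 * π * ∑ i, if b i then θ i else 0))) / 4 := by
        rw [Finset.mul_sum, Finset.sum_div, ← Finset.sum_add_distrib]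
        exact Finset.sum_congr rfl fun b _ => by ring
    _ ≤ -(1 / (128 * (m : ℝ))) + 1 := by
        rw [sum_colWeight]
        have e : 1 / (128 * (m : ℝ)) = 1 / (32 * (m : ℝ)) / 4 := by field_simp; norm_num
        rw [e]
        linarith
    _ ≤ _ := Real.add_one_le_exp _

/-- Independence of the columns: the average of a product over columns is a power. -/
lemma sum_matrix_weight_mul_prod {m n : ℕ} (p : ℝ) (f : (Fin m → Bool) → ℝ) :
    ∑ a : Fin m → Fin n → Bool, (∏ i, ∏ j, (if a i j then p else 1 - p)) *
        ∏ j, f (fun i => a i j) = (∑ b : Fin m → Bool, colWeight p b * f b) ^ n := by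
  have h : (∑ b : Fin m → Bool, colWeight p b * f b) ^ n =
      ∏ _j : Fin n, ∑ b : Fin m → Bool, colWeight p b * f b := by simp
  rw [h, Fintype.prod_sum]
  refine Fintype.sum_equiv (Equiv.piComm fun _ _ => Bool) _ _ fun a => ?_
  rw [Finset.prod_comm, ← Finset.prod_mul_distrib]
  rfl

/-- Markov's inequality for a nonnegative function on a finite probability space, in the form:
a mean of at most `ε²` forces values of at most `ε` with probability at least `1 - ε`. -/
lemma finite_markov {α : Type*} [Fintype α] (w F : α → ℝ) (hw : ∀ a, 0 ≤ w a)
    (hF : ∀ a, 0 ≤ F a) (hsum : ∑ a, w a = 1) {ε : ℝ} (hε : 0 < ε)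
    (hmean : ∑ a, w a * F a ≤ ε * ε) :
    ∑ a ∈ Finset.univ.filter (fun a => F a ≤ ε), w a ≥ 1 - ε := by
  have hsplit := Finset.sum_filter_add_sum_filter_not Finset.univ (fun a => F a ≤ ε) w
  rw [hsum] at hsplit
  have hbad : ε * ∑ a ∈ Finset.univ.filter (fun a => ¬ F a ≤ ε), w a ≤ ε * ε := by
    refine le_trans ?_ hmean
    rw [Finset.mul_sum]
    refine le_trans (Finset.sum_le_sum fun a ha => ?_) (Finset.sum_le_sum_of_subset_of_nonneg
      (Finset.filter_subset (fun a => ¬ F a ≤ ε) _) fun a _ _ => mul_nonneg (hw a) (hF a))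
    rw [Finset.mem_filter, not_le] at ha
    nlinarith [hw a, ha.2]
  have := le_of_mul_le_mul_left hbad hε
  linarith

/-- There are `c, C > 0` such that for `m ≥ C`, `p ∈ (0,1/2]`, `t = pm`, and
`A ∈ {0,1}^{m×n}` with independent `Bernoulli(p)` entries: with probability at
least `1 - exp(-c·n/m)` one has
`∫_{θ ∈ [-1/2,1/2)^m : d₂(θ,Λ) ≥ 1/(16√t)} |∏_j cos(2π⟨A^j,θ⟩)| dθ ≤ exp(-c·n/m)`,
where `Λ = {-1/2,0,1/2}^m` and `d₂(θ,Λ) ≥ δ` is expressed as `‖θ-s‖₂ ≥ δ` for all `s ∈ Λ`. -/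
theorem stmt_14 : ∃ c C : ℝ, 0 < c ∧ 0 < C ∧
    ∀ (m n : ℕ), 0 < m → 0 < n → (m : ℝ) ≥ C → ∀ p : ℝ, 0 < p → p ≤ 1 / 2 →
    ∑ a ∈ Finset.univ.filter (fun a : Fin m → Fin n → Bool =>
          (∫ θ in {θ : Fin m → ℝ |
              (∀ i, θ i ∈ Set.Ico (-(1 / 2) : ℝ) (1 / 2)) ∧
              ∀ s ∈ Fintype.piFinset fun _ : Fin m => ({-(1 / 2), 0, 1 / 2} : Finset ℝ),
                1 / (16 * Real.sqrt (p * m)) ≤ Real.sqrt (∑ i, (θ i - s i) ^ 2)},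
              |∏ j, Real.cos (2 * π * ∑ i, if a i j then θ i else 0)|) ≤
            Real.exp (-c * n / m)),
        ∏ i, ∏ j, (if a i j then p else 1 - p) ≥
      1 - Real.exp (-c * n / m) := by
  refine ⟨1 / 256, 1, by norm_num, by norm_num, ?_⟩
  intro m n hm hn _ p h0 h1
  have hmR : (0 : ℝ) < m := by exact_mod_cast hm
  set S : Set (Fin m → ℝ) := {θ : Fin m → ℝ |
    (∀ i, θ i ∈ Set.Ico (-(1 / 2) : ℝ) (1 / 2)) ∧
    ∀ s ∈ Fintype.piFinset fun _ : Fin m => ({-(1 / 2), 0, 1 / 2} : Finset ℝ),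
      1 / (16 * Real.sqrt (p * m)) ≤ Real.sqrt (∑ i, (θ i - s i) ^ 2)} with hS
  have hsub : S ⊆ Set.Icc (fun _ => -(1 / 2)) (fun _ => 1 / 2) := fun θ hθ =>
    ⟨fun i => (hθ.1 i).1, fun i => (hθ.1 i).2.le⟩
  have hvol : volume S ≤ 1 := by
    refine (measure_mono hsub).trans ?_
    rw [Real.volume_Icc_pi]
    norm_num
  have hint : ∀ a : Fin m → Fin n → Bool, IntegrableOn
      (fun θ : Fin m → ℝ => |∏ j, Real.cos (2 * π * ∑ i, if a i j then θ i else 0)|) S := by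
    intro a
    refine IntegrableOn.mono_set (ContinuousOn.integrableOn_Icc (Continuous.continuousOn ?_)) hsub
    refine (continuous_finsetProd _ fun j _ => Real.continuous_cos.comp
      (continuous_const.mul (continuous_finsetSum _ fun i _ => ?_))).abs
    split_ifs
    · exact continuous_apply i
    · exact continuous_const
  have hpow : ∀ θ : Fin m → ℝ, ∑ a : Fin m → Fin n → Bool,
      (∏ i, ∏ j, (if a i j then p else 1 - p)) *
        |∏ j, Real.cos (2 * π * ∑ i, if a i j then θ i else 0)| =
      (∑ b : Fin m → Bool, colWeight p b *
        |Real.cos (2 * π * ∑ i, if b i then θ i else 0)|) ^ n := by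
    intro θ
    rw [← sum_matrix_weight_mul_prod]
    simp_rw [Finset.abs_prod]
  apply finite_markov
  · intro a
    refine Finset.prod_nonneg fun i _ => Finset.prod_nonneg fun j _ => ?_
    split_ifs <;> linarith
  · intro a
    exact integral_nonneg fun θ => abs_nonneg _
  · have h := sum_matrix_weight_mul_prod (m := m) (n := n) p (fun _ => 1)
    simpa [sum_colWeight] using h
  · exact Real.exp_pos _
  · simp_rw [← integral_const_mul]
    rw [← integral_finsetSum _ fun a _ => (hint a).const_mul _]
    simp_rw [hpow]
    have hE : Real.exp (-(1 / 256) * n / m) * Real.exp (-(1 / 256) * n / m) =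
        Real.exp (-(1 / (128 * (m : ℝ)))) ^ n := by
      rw [← Real.exp_add, ← Real.exp_nat_mul]
      congr 1
      field_simp
      norm_num
    rw [hE]
    refine (Real.le_norm_self _).trans ?_
    refine (norm_setIntegral_le_of_norm_le_const (E := ℝ)
      (C := Real.exp (-(1 / (128 * (m : ℝ)))) ^ n) (hvol.trans_lt ENNReal.one_lt_top)
      fun θ hθ => ?_).trans ?_
    · have hnn : 0 ≤ ∑ b : Fin m → Bool, colWeight p b *
          |Real.cos (2 * π * ∑ i, if b i then θ i else 0)| :=
        Finset.sum_nonneg fun b _ => mul_nonneg (colWeight_nonneg h0 h1 b) (abs_nonneg _)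
      rw [Real.norm_eq_abs, abs_of_nonneg (pow_nonneg hnn n)]
      exact pow_le_pow_left₀ hnn (column_average_le hm h0 h1 θ hθ.1 hθ.2) n
    · refine mul_le_of_le_one_right (by positivity) ?_
      exact ENNReal.toReal_le_of_le_ofReal zero_le_one (by simpa using hvol)
end

section
/- Let m be a positive integer, p ∈ [0, 1/2], and θ ∈ ℝ^m with ‖θ‖_∞ ≤ 1/4. Let a ∈ {0,1}^m be random with independent coordinates satisfying Pr[a_i = 1] = p. Then E[|cos(2π·Σ_{i=1}^m a_i·θ_i)|] ≤ 1 - (π²/4)·p·‖θ‖_∞². -/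
open Real

/-!
Pick a coordinate `i` with `|θ i| = ‖θ‖` and condition on all the others: it suffices to bound
`(1 - p) |cos x| + p |cos (x + 2πθ i)|` uniformly in `x`. As `p ≤ 1/2`, this is at most
`(1 - 2p) + p (|cos x| + |cos (x + 2πθ i)|)`. With `u = πθ i`, so `|u| ≤ π/4`, the sum-to-product
formulas bound the last bracket by `2 max (|cos u|, |sin u|) = 2 cos u`, and
`cos u ≤ 1 - (2/π²) u² ≤ 1 - u²/8`.
-/

/-- For shifts `2u` with `|u| ≤ π/4`, the extremal value of `|cos x| + |cos (x + 2u)|` is attained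
at `x = -u`. -/
lemma abs_cos_add_abs_cos_le (x u : ℝ) (hu : |u| ≤ π / 4) :
    |cos x| + |cos (x + 2 * u)| ≤ 2 * cos u := by
  have hu' := abs_le.mp hu
  have hc : 0 ≤ cos u := cos_nonneg_of_mem_Icc ⟨by linarith [pi_pos], by linarith [pi_pos]⟩
  have h2 : 0 ≤ cos (2 * u) :=
    cos_nonneg_of_mem_Icc ⟨by linarith [pi_pos], by linarith [pi_pos]⟩
  have hs : |sin u| ≤ cos u := by
    refine abs_le_of_sq_le_sq ?_ hc
    rw [cos_two_mul] at h2
    nlinarith [sin_sq_add_cos_sq u]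
  have hx : cos x = cos (x + u) * cos u + sin (x + u) * sin u := by
    rw [← cos_sub]; congr 1; ring
  have hy : cos (x + 2 * u) = cos (x + u) * cos u - sin (x + u) * sin u := by
    rw [← cos_add]; congr 1; ring
  have hA : |cos (x + u) * cos u| ≤ cos u := by
    rw [abs_mul, abs_of_nonneg hc]
    exact mul_le_of_le_one_left hc (abs_cos_le_one _)
  have hB : |sin (x + u) * sin u| ≤ cos u := by
    rw [abs_mul]
    exact (mul_le_of_le_one_left (abs_nonneg _) (abs_sin_le_one _)).trans hs
  rw [hx, hy]
  rw [abs_le] at hA hB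
  rcases abs_cases (cos (x + u) * cos u + sin (x + u) * sin u) with h | h <;>
  rcases abs_cases (cos (x + u) * cos u - sin (x + u) * sin u) with h' | h' <;>
  linarith [h.1, h'.1, hA.1, hA.2, hB.1, hB.2]

/-- The one-coordinate bound, uniform in the contribution `x` of the other coordinates. -/
lemma one_coordinate_bound (p t x : ℝ) (hp0 : 0 ≤ p) (hp : p ≤ 1 / 2) (ht : |t| ≤ 1 / 4) :
    p * |cos (x + 2 * (π * t))| + (1 - p) * |cos x| ≤ 1 - π ^ 2 / 4 * p * t ^ 2 := by
  have hu : |π * t| ≤ π / 4 := by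
    rw [abs_mul, abs_of_pos pi_pos]
    nlinarith [pi_pos]
  have h1 := abs_cos_add_abs_cos_le x (π * t) hu
  have h2 := cos_le_one_sub_mul_cos_sq (x := π * t) (by linarith [pi_pos])
  have h3 : π ^ 2 * t ^ 2 / 8 ≤ 2 * t ^ 2 := by
    have : π ^ 2 ≤ 16 := by nlinarith [pi_pos, pi_le_four]
    nlinarith [sq_nonneg t]
  have h4 : 2 / π ^ 2 * (π * t) ^ 2 = 2 * t ^ 2 := by
    field_simp
  rw [h4] at h2
  have h5 : (1 - 2 * p) * |cos x| ≤ 1 - 2 * p :=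
    mul_le_of_le_one_right (by linarith) (abs_cos_le_one x)
  have h6 : p * (|cos x| + |cos (x + 2 * (π * t))|) ≤ p * (2 - π ^ 2 * t ^ 2 / 4) :=
    mul_le_mul_of_nonneg_left (by linarith) hp0
  linarith

lemma sum_bernoulli_weights (n : ℕ) (p : ℝ) :
    ∑ a : Fin n → Bool, (∏ i, if a i then p else 1 - p) = 1 := by
  have h := Finset.prod_univ_sum (fun _ : Fin n => (Finset.univ : Finset Bool))
    (fun _ b => if b then p else 1 - p)
  rw [Fintype.piFinset_univ] at h
  rw [← h]
  simp

/-- For `a ∈ {0,1}^m` with independent `Bernoulli(p)` coordinates and `‖θ‖_∞ ≤ 1/4`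
(sup norm on `Fin m → ℝ`): `E[|cos(2π ∑ aᵢθᵢ)|] ≤ 1 - (π²/4)·p·‖θ‖_∞²`.
The expectation is written as an explicit sum over `a : Fin m → Bool`. -/
theorem stmt_15 (m : ℕ) (hm : 0 < m) (p : ℝ) (hp0 : 0 ≤ p) (hp : p ≤ 1 / 2)
    (θ : Fin m → ℝ) (hθ : ‖θ‖ ≤ 1 / 4) :
    ∑ a : Fin m → Bool, (∏ i, if a i then p else 1 - p) *
        |Real.cos (2 * π * ∑ i, if a i then θ i else 0)| ≤
      1 - π ^ 2 / 4 * p * ‖θ‖ ^ 2 := by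
  obtain ⟨n, rfl⟩ : ∃ n, m = n + 1 := ⟨m - 1, by omega⟩
  obtain ⟨i, hi⟩ : ∃ i, |θ i| = ‖θ‖ := by
    obtain ⟨i, -, hi⟩ := Finset.exists_max_image Finset.univ (fun i => ‖θ i‖)
      Finset.univ_nonempty
    exact ⟨i, le_antisymm (norm_le_pi_norm θ i)
      ((pi_norm_le_iff_of_nonneg (norm_nonneg _)).2 fun j => hi j (Finset.mem_univ j))⟩
  rw [← hi] at hθ ⊢
  rw [sq_abs, ← (Fin.insertNthEquiv (fun _ => Bool) i).sum_comp, Fintype.sum_prod_type_right]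
  calc _ ≤ ∑ b : Fin n → Bool, (∏ j, if b j then p else 1 - p) *
        (1 - π ^ 2 / 4 * p * θ i ^ 2) := by
        refine Finset.sum_le_sum fun b _ => ?_
        have hw : 0 ≤ ∏ j, (if b j then p else 1 - p) :=
          Finset.prod_nonneg fun j _ => by split_ifs <;> linarith
        have key := mul_le_mul_of_nonneg_left (one_coordinate_bound p (θ i)
          (2 * π * ∑ j, if b j then θ (i.succAbove j) else 0) hp0 hp hθ) hw
        refine le_of_eq_of_le ?_ key
        have harg (s : ℝ) : 2 * π * (θ i + s) = 2 * π * s + 2 * (π * θ i) := by ring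
        simp only [Fintype.sum_bool, Fin.insertNthEquiv_apply, Fin.prod_univ_succAbove _ i,
          Fin.sum_univ_succAbove _ i, Fin.insertNth_apply_same, Fin.insertNth_apply_succAbove,
          if_true, Bool.false_eq_true, if_false, zero_add, harg]
        ring
    _ = 1 - π ^ 2 / 4 * p * θ i ^ 2 := by
        rw [← Finset.sum_mul, sum_bernoulli_weights, one_mul]
end
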